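/- arXiv:2109.01780 — 5 statements merged into one kernel-verified Lean document; each statement's English description precedes it below -/
import Mathlib

section
/- Fix N ∈ ℕ⁺, a set Ω, points X₁,…,X_N ∈ Ω, a function w : Ω → ℝ with |w(x)| ≤ B for all x ∈ Ω (where B ≥ 0), and a nonempty class F of functions from Ω to ℝ that is uniformly bounded on {X₁,…,X_N}. Then 2^{−N} ∑_{σ∈{−1,1}^N} sup_{u∈F} (1/N) ∑_{k=1}^N σ_k w(X_k) u(X_k) ≤ B · 2^{−N} ∑_{σ∈{−1,1}^N} sup_{u∈F} (1/N) ∑_{k=1}^N σ_k u(X_k). -/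
/-!
For weights `a ∈ ℝ^N` let `Φ(a)` be the sum over sign vectors `σ` of
`sup_{u ∈ F} (1/N) ∑ σ_k a_k u(X_k)`. As a sum of suprema of linear functions of `a`, `Φ` is convex
(`convexOn_weightedRademacherSum`), so on the cube `[-B, B]^N`, the convex hull of `{-B, B}^N`, it is
dominated by its values at the vertices. Flipping signs of `σ` is a bijection of `{-1, 1}^N`, so
`Φ` takes the same value `Φ(B, …, B)` at every vertex (`weightedRademacherSum_vertex`), and this
value is `B` times the unweighted sum.
-/

/-- The empirical Rademacher complexity of a class of functions `F` on the sample
`Z 0, …, Z (N-1)`: the average over all sign vectors `σ ∈ {−1,1}^N` of the supremum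
over `u ∈ F` of the signed empirical averages. Sign vectors are encoded by
`σ : Fin N → Bool`, with `true ↦ 1` and `false ↦ -1`. -/
noncomputable def empRademacher {Ω : Type*} (N : ℕ) (F : Set (Ω → ℝ)) (Z : Fin N → Ω) : ℝ :=
  (2 : ℝ)⁻¹ ^ N * ∑ σ : Fin N → Bool,
    ⨆ u : F, (1 / (N : ℝ)) * ∑ k, (if σ k then (1 : ℝ) else -1) * (u : Ω → ℝ) (Z k)

/-- The unnormalised Rademacher sum of the class `F` on the sample `X`, with the `k`-th sample value
weighted by `a k`. -/
noncomputable def weightedRademacherSum {Ω : Type*} {N : ℕ} (F : Set (Ω → ℝ)) (X : Fin N → Ω)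
    (a : Fin N → ℝ) : ℝ :=
  ∑ σ : Fin N → Bool,
    ⨆ u : F, (1 / (N : ℝ)) * ∑ k, (if σ k then (1 : ℝ) else -1) * a k * (u : Ω → ℝ) (X k)

lemma bddAbove_weighted {Ω : Type*} {N : ℕ} (F : Set (Ω → ℝ)) (X : Fin N → Ω)
    (C : ℝ) (hC : ∀ u ∈ F, ∀ k : Fin N, |u (X k)| ≤ C) (a : Fin N → ℝ) (σ : Fin N → Bool) :
    BddAbove (Set.range fun u : F =>
      (1 / (N : ℝ)) * ∑ k, (if σ k then (1 : ℝ) else -1) * a k * (u : Ω → ℝ) (X k)) := by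
  refine ⟨(1 / (N : ℝ)) * ∑ k, |a k| * C, ?_⟩
  rintro _ ⟨u, rfl⟩
  refine mul_le_mul_of_nonneg_left (Finset.sum_le_sum fun k _ => ?_) (by positivity)
  refine (le_abs_self _).trans ?_
  rw [abs_mul, abs_mul]
  have hs : |if σ k then (1 : ℝ) else -1| = 1 := by split_ifs <;> simp
  rw [hs, one_mul]
  exact mul_le_mul_of_nonneg_left (hC u u.2 k) (abs_nonneg _)

lemma convexOn_weightedRademacherSum {Ω : Type*} {N : ℕ} (F : Set (Ω → ℝ)) (hF : F.Nonempty)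
    (X : Fin N → Ω) (C : ℝ) (hC : ∀ u ∈ F, ∀ k : Fin N, |u (X k)| ≤ C) :
    ConvexOn ℝ Set.univ (weightedRademacherSum F X) := by
  have : Nonempty F := hF.to_subtype
  refine ⟨convex_univ, fun a _ b _ s t hs ht _ => ?_⟩
  simp only [weightedRademacherSum, smul_eq_mul]
  rw [Finset.mul_sum, Finset.mul_sum, ← Finset.sum_add_distrib]
  refine Finset.sum_le_sum fun σ _ => ciSup_le fun u => ?_
  have ha := mul_le_mul_of_nonneg_left (le_ciSup (bddAbove_weighted F X C hC a σ) u) hs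
  have hb := mul_le_mul_of_nonneg_left (le_ciSup (bddAbove_weighted F X C hC b σ) u) ht
  refine le_trans (le_of_eq ?_) (add_le_add ha hb)
  simp only [Finset.mul_sum, ← Finset.sum_add_distrib, Pi.add_apply, Pi.smul_apply, smul_eq_mul]
  exact Finset.sum_congr rfl fun k _ => by ring

lemma weightedRademacherSum_vertex {Ω : Type*} {N : ℕ} (F : Set (Ω → ℝ)) (X : Fin N → Ω)
    (B : ℝ) (a : Fin N → ℝ) (ha : ∀ k, a k = -B ∨ a k = B) :
    weightedRademacherSum F X a = weightedRademacherSum F X fun _ => B := by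
  classical
  -- Flip the sign of `σ` at the coordinates where the weight is `-B`.
  let flip : (Fin N → Bool) → (Fin N → Bool) := fun σ k => if a k = B then σ k else !σ k
  have hflip : Function.Involutive flip := by
    intro σ
    funext k
    by_cases h : a k = B <;> simp [flip, h]
  unfold weightedRademacherSum
  rw [← Equiv.sum_comp hflip.toPerm]
  refine Finset.sum_congr rfl fun σ _ => ?_
  congr 1
  funext u
  congr 1
  refine Finset.sum_congr rfl fun k _ => ?_
  congr 1
  by_cases h : a k = B
  · simp [flip, h]
  · have hneg := (ha k).resolve_right h
    cases hσ : σ k <;> simp [flip, h, hσ] <;> simp [hneg]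

/-- Lemma 5.3 of the paper (structural result, stated conditionally on a fixed sample):
multiplying a function class pointwise by a weight `w` bounded by `B` multiplies the
empirical Rademacher complexity by at most `B`. -/
theorem stmt_1 {Ω : Type*} (N : ℕ) (hN : 0 < N) (X : Fin N → Ω)
    (w : Ω → ℝ) (B : ℝ) (hB : 0 ≤ B) (hw : ∀ x : Ω, |w x| ≤ B)
    (F : Set (Ω → ℝ)) (hF : F.Nonempty)
    (C : ℝ) (hC : ∀ u ∈ F, ∀ k : Fin N, |u (X k)| ≤ C) :
    (2 : ℝ)⁻¹ ^ N * ∑ σ : Fin N → Bool,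
        ⨆ u : F, (1 / (N : ℝ)) * ∑ k, (if σ k then (1 : ℝ) else -1) * w (X k) * (u : Ω → ℝ) (X k)
      ≤ B * empRademacher N F X := by
  have hmem : (fun k => w (X k)) ∈
      convexHull ℝ (Set.univ.pi fun _ : Fin N => ({-B, B} : Set ℝ)) := by
    rw [convexHull_pi]
    intro k _
    rw [convexHull_pair, segment_eq_Icc (by linarith)]
    exact abs_le.mp (hw (X k))
  obtain ⟨a, ha, hle⟩ := ((convexOn_weightedRademacherSum F hF X C hC).subset
    (Set.subset_univ _) (convex_convexHull ℝ _)).exists_ge_of_mem_convexHull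
      (subset_convexHull ℝ _) hmem
  rw [weightedRademacherSum_vertex F X B a fun k => by simpa using ha k trivial] at hle
  have hconst : weightedRademacherSum F X (fun _ => B) = B * ∑ σ : Fin N → Bool,
      ⨆ u : F, (1 / (N : ℝ)) * ∑ k, (if σ k then (1 : ℝ) else -1) * (u : Ω → ℝ) (X k) := by
    unfold weightedRademacherSum
    rw [Finset.mul_sum]
    refine Finset.sum_congr rfl fun σ _ => ?_
    rw [Real.mul_iSup_of_nonneg hB]
    congr 1
    funext u
    simp only [Finset.mul_sum]
    exact Finset.sum_congr rfl fun k _ => by ring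
  rw [hconst] at hle
  unfold empRademacher
  rw [mul_left_comm]
  exact mul_le_mul_of_nonneg_left hle (by positivity)
end

section
/- Let Ω be a set, B > 0, and let F be a class of functions from Ω to ℝ with 0 ∈ F and sup_{x∈Ω} |u(x)| ≤ B for every u ∈ F. Then for every N ∈ ℕ⁺, every choice of points Z₁,…,Z_N ∈ Ω and every δ ∈ (0, B): 2^{−N} ∑_{σ∈{−1,1}^N} sup_{u∈F} (1/N) ∑_{k=1}^N σ_k u(Z_k) ≤ 4δ + (12/√N) ∫_δ^B √( log( 2 · C(ε, F|_Z, d_∞) ) ) dε, where F|_Z = {(u(Z₁),…,u(Z_N)) : u ∈ F} ⊆ ℝ^N. -/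
/-- The covering number `C(ε, W, d_∞)`: the minimal cardinality of a finite set
`V ⊆ ℝ^n` such that every `w ∈ W` is within `d_∞`-distance `< ε` of some `v ∈ V`.
Note that on `Fin n → ℝ` the metric `dist` is exactly the sup-distance `d_∞`. -/
noncomputable def coveringNumber {n : ℕ} (ε : ℝ) (W : Set (Fin n → ℝ)) : ℕ :=
  sInf {m : ℕ | ∃ V : Finset (Fin n → ℝ), V.card = m ∧ ∀ w ∈ W, ∃ v ∈ V, dist w v < ε}

/-- The restriction `F|_Z = {(u(Z₁),…,u(Z_N)) : u ∈ F} ⊆ ℝ^N` of a function class `F`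
to the sample `Z`. -/
def restrictClass {Ω : Type*} {N : ℕ} (F : Set (Ω → ℝ)) (Z : Fin N → Ω) :
    Set (Fin N → ℝ) :=
  (fun u : Ω → ℝ => fun k => u (Z k)) '' F

/-- The signed sum `∑ σ_k w_k`, with `true ↦ 1` and `false ↦ -1`. -/
noncomputable def signedSum {N : ℕ} (σ : Fin N → Bool) (w : Fin N → ℝ) : ℝ :=
  ∑ k, (if σ k then (1 : ℝ) else -1) * w k

lemma signedSum_sub {N : ℕ} (σ : Fin N → Bool) (v w : Fin N → ℝ) :
    signedSum σ (v - w) = signedSum σ v - signedSum σ w := by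
  simp [signedSum, mul_sub, Finset.sum_sub_distrib]

lemma signedSum_le {N : ℕ} (σ : Fin N → Bool) (w : Fin N → ℝ) {s : ℝ} (h : ‖w‖ ≤ s) :
    signedSum σ w ≤ N * s := by
  have : ∀ k ∈ Finset.univ, (if σ k then (1 : ℝ) else -1) * w k ≤ s := by
    intro k _
    have h1 := (norm_le_pi_norm w k).trans h
    rw [Real.norm_eq_abs, abs_le] at h1
    split_ifs <;> linarith
  simpa [signedSum] using Finset.sum_le_sum this

/-- The Rademacher sums are subgaussian; the sign average of the exponential factorizes into
hyperbolic cosines. -/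
lemma sum_exp_signedSum_le {N : ℕ} (w : Fin N → ℝ) (l s : ℝ) (h : ‖w‖ ≤ s) :
    ∑ σ : Fin N → Bool, Real.exp (l * signedSum σ w) ≤ 2 ^ N * Real.exp (l ^ 2 * (N * s ^ 2) / 2) := by
  have h1 : ∑ σ : Fin N → Bool, Real.exp (l * signedSum σ w)
      = ∏ k : Fin N, ∑ b : Bool, Real.exp (l * ((if b then (1 : ℝ) else -1) * w k)) := by
    rw [Finset.prod_univ_sum, Fintype.piFinset_univ]
    refine Finset.sum_congr rfl fun σ _ => ?_
    rw [signedSum, Finset.mul_sum, Real.exp_sum]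
  have h2 : ∀ k ∈ Finset.univ, ∑ b : Bool, Real.exp (l * ((if b then (1 : ℝ) else -1) * w k))
      ≤ 2 * Real.exp (l ^ 2 * s ^ 2 / 2) := by
    intro k _
    have h3 := Real.cosh_le_exp_half_sq (l * w k)
    rw [Real.cosh_eq] at h3
    have h4 : (w k) ^ 2 ≤ s ^ 2 := by
      have h1 := (norm_le_pi_norm w k).trans h
      rw [Real.norm_eq_abs] at h1
      exact sq_le_sq' (by linarith [(abs_le.1 h1).1]) (abs_le.1 h1).2
    have h5 : Real.exp ((l * w k) ^ 2 / 2) ≤ Real.exp (l ^ 2 * s ^ 2 / 2) := by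
      apply Real.exp_le_exp.2
      rw [mul_pow]
      gcongr
    simp only [Fintype.sum_bool, if_true, Bool.false_eq_true, if_false, one_mul, neg_mul, mul_neg]
    linarith
  rw [h1]
  refine (Finset.prod_le_prod (fun k _ => Finset.sum_nonneg fun b _ => (Real.exp_pos _).le)
    h2).trans (le_of_eq ?_)
  rw [Finset.prod_const, Finset.card_univ, Fintype.card_fin, mul_pow, ← Real.exp_nat_mul]
  congr 2
  ring

/-- Massart's finite-class inequality: the signed sums over a finite set of at most `exp (2 q²)`
vectors of sup-norm at most `s` have a common majorant `m` of average at most `2 s √N q`. -/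
lemma exists_massart {N : ℕ} (hN : 0 < N) (A : Finset (Fin N → ℝ)) {s q : ℝ} (hs : 0 < s)
    (hq : 0 < q) (hA : ∀ a ∈ A, ‖a‖ ≤ s) (hcard : (A.card : ℝ) ≤ Real.exp (2 * q ^ 2)) :
    ∃ m : (Fin N → Bool) → ℝ, (∀ σ, ∀ a ∈ A, signedSum σ a ≤ m σ) ∧
      ∑ σ, m σ ≤ 2 ^ N * (2 * s * Real.sqrt N * q) := by
  have hr : 0 < Real.sqrt N := Real.sqrt_pos.2 (by exact_mod_cast hN)
  have hr2 : Real.sqrt N ^ 2 = N := Real.sq_sqrt (by positivity)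
  set r := Real.sqrt N
  -- `l` minimizes `(2 q² + l² N s² / 2) / l`; then `2 q² + l² N s² / 2 = 4 q²`.
  set l := 2 * q / (s * r) with hl
  have hl0 : 0 < l := by positivity
  have hls : l ^ 2 * (N * s ^ 2) / 2 = 2 * q ^ 2 := by
    rw [← hr2, hl]; field_simp
  -- The majorant comes from `y ≤ c - 1 + exp (y - c)` with `y = l * S` and `c = 4 q²`.
  refine ⟨fun σ => (4 * q ^ 2 - 1 +
    ∑ a ∈ A, Real.exp (l * signedSum σ a) * Real.exp (-(4 * q ^ 2))) / l, ?_, ?_⟩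
  · intro σ a ha
    rw [le_div_iff₀ hl0]
    have h1 := Real.add_one_le_exp (l * signedSum σ a + -(4 * q ^ 2))
    rw [Real.exp_add] at h1
    have h2 := Finset.single_le_sum
      (f := fun a => Real.exp (l * signedSum σ a) * Real.exp (-(4 * q ^ 2)))
      (fun a _ => by positivity) ha
    linarith
  · have h3 : ∑ σ : Fin N → Bool, ∑ a ∈ A, Real.exp (l * signedSum σ a) * Real.exp (-(4 * q ^ 2))
        ≤ 2 ^ N := by
      rw [Finset.sum_comm]
      have : ∀ a ∈ A, ∑ σ : Fin N → Bool, Real.exp (l * signedSum σ a) * Real.exp (-(4 * q ^ 2))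
          ≤ 2 ^ N * Real.exp (-(2 * q ^ 2)) := by
        intro a ha
        have h4 := sum_exp_signedSum_le a l s (hA a ha)
        rw [hls] at h4
        rw [← Finset.sum_mul]
        calc _ ≤ 2 ^ N * Real.exp (2 * q ^ 2) * Real.exp (-(4 * q ^ 2)) := by gcongr
          _ = _ := by rw [mul_assoc, ← Real.exp_add]; congr 2; ring
      refine (Finset.sum_le_sum this).trans ?_
      rw [Finset.sum_const, nsmul_eq_mul]
      calc (A.card : ℝ) * (2 ^ N * Real.exp (-(2 * q ^ 2)))
          ≤ Real.exp (2 * q ^ 2) * (2 ^ N * Real.exp (-(2 * q ^ 2))) := by gcongr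
        _ = 2 ^ N := by
          rw [mul_left_comm, ← Real.exp_add]; simp
    rw [← Finset.sum_div, Finset.sum_add_distrib, Finset.sum_const, Finset.card_univ,
      nsmul_eq_mul, div_le_iff₀ hl0]
    have h5 : 2 * s * r * q * l = 4 * q ^ 2 := by rw [hl]; field_simp; norm_num
    rw [mul_assoc, h5]
    simp only [Fintype.card_fun, Fintype.card_bool, Fintype.card_fin, Nat.cast_pow, Nat.cast_ofNat]
    linarith

/-- In `ℝ^n` bounded sets are totally bounded, so the infimum in `coveringNumber` is attained. -/
lemma exists_cover {n : ℕ} {W : Set (Fin n → ℝ)} (hW : Bornology.IsBounded W) {ε : ℝ}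
    (hε : 0 < ε) :
    ∃ V : Finset (Fin n → ℝ), V.card = coveringNumber ε W ∧ ∀ w ∈ W, ∃ v ∈ V, dist w v < ε := by
  have hne : {m : ℕ | ∃ V : Finset (Fin n → ℝ), V.card = m ∧
      ∀ w ∈ W, ∃ v ∈ V, dist w v < ε}.Nonempty := by
    obtain ⟨t, ht, hc⟩ := Metric.totallyBounded_iff.1
      (hW.isCompact_closure.totallyBounded.subset subset_closure) ε hε
    refine ⟨_, ht.toFinset, rfl, fun w hw => ?_⟩
    simpa using hc hw
  exact Nat.sInf_mem hne

lemma coveringNumber_anti {n : ℕ} {W : Set (Fin n → ℝ)} (hW : Bornology.IsBounded W) {ε ε' : ℝ}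
    (hε : 0 < ε) (h : ε ≤ ε') : coveringNumber ε' W ≤ coveringNumber ε W := by
  obtain ⟨V, hV, hc⟩ := exists_cover hW hε
  refine Nat.sInf_le ⟨V, hV, fun w hw => ?_⟩
  obtain ⟨v, hv, hd⟩ := hc w hw
  exact ⟨v, hv, hd.trans_le h⟩

lemma coveringNumber_pos {n : ℕ} {W : Set (Fin n → ℝ)} (hW : Bornology.IsBounded W)
    (hne : W.Nonempty) {ε : ℝ} (hε : 0 < ε) : 0 < coveringNumber ε W := by
  obtain ⟨V, hV, hc⟩ := exists_cover hW hε
  obtain ⟨w, hw⟩ := hne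
  obtain ⟨v, hv, -⟩ := hc w hw
  rw [← hV]
  exact Finset.card_pos.2 ⟨v, hv⟩

/-- The entropy integrand `√(log (2 C(ε, W, d_∞)))`. -/
noncomputable def entropy {n : ℕ} (W : Set (Fin n → ℝ)) (ε : ℝ) : ℝ :=
  Real.sqrt (Real.log (2 * (coveringNumber ε W : ℝ)))

lemma entropy_anti {n : ℕ} {W : Set (Fin n → ℝ)} (hW : Bornology.IsBounded W)
    (hne : W.Nonempty) {ε ε' : ℝ} (hε : 0 < ε) (h : ε ≤ ε') : entropy W ε' ≤ entropy W ε := by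
  have h1 : (coveringNumber ε' W : ℝ) ≤ coveringNumber ε W := by
    exact_mod_cast coveringNumber_anti hW hε h
  have h2 : (0 : ℝ) < coveringNumber ε' W := by
    exact_mod_cast coveringNumber_pos hW hne (hε.trans_le h)
  unfold entropy
  gcongr

lemma entropy_intervalIntegrable {n : ℕ} {W : Set (Fin n → ℝ)} (hW : Bornology.IsBounded W)
    (hne : W.Nonempty) {a b : ℝ} (ha : 0 < a) (hb : 0 < b) :
    IntervalIntegrable (entropy W) MeasureTheory.volume a b := by
  apply AntitoneOn.intervalIntegrable
  intro x hx y _ hxy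
  exact entropy_anti hW hne ((lt_min ha hb).trans_le hx.1) hxy

/-- Chaining down to scale `B / 2 ^ M`: every `w ∈ W` has an approximation at that scale at which
the signed sums are dominated by one majorant `m`, bounded on average by an entropy integral.
The cardinality bound is at the next scale so that it also holds for the starting cover `{0}`,
which is not a cover by open balls of radius `B`. -/
lemma exists_chain {N : ℕ} (hN : 0 < N) {W : Set (Fin N → ℝ)} {B : ℝ} (hB : 0 < B)
    (hne : W.Nonempty) (hWB : ∀ w ∈ W, ‖w‖ ≤ B) (hW : Bornology.IsBounded W) (M : ℕ) :
    ∃ (V : Finset (Fin N → ℝ)) (m : (Fin N → Bool) → ℝ),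
      V.card ≤ coveringNumber (B / 2 ^ (M + 1)) W ∧
      (∀ w ∈ W, ∃ v ∈ V, dist w v ≤ B / 2 ^ M ∧ ∀ σ, signedSum σ v ≤ m σ) ∧
      ∑ σ, m σ ≤ 2 ^ N * (12 * Real.sqrt N * ∫ ε in (B / 2 ^ (M + 1))..(B / 2), entropy W ε) := by
  induction M with
  | zero =>
    refine ⟨{0}, fun _ => 0, ?_, ?_, ?_⟩
    · rw [Finset.card_singleton]
      exact coveringNumber_pos hW hne (by positivity)
    · intro w hw
      refine ⟨0, by simp, by simpa using hWB w hw, fun σ => by simp [signedSum]⟩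
    · simp
  | succ M ih =>
    obtain ⟨V, m, hVc, hV, hm⟩ := ih
    set e := B / 2 ^ (M + 1) with he
    have he0 : 0 < e := by positivity
    have heM : B / 2 ^ M = 2 * e := by rw [he, pow_succ]; field_simp
    have heM2 : B / 2 ^ (M + 1 + 1) = e / 2 := by rw [he, pow_succ _ (M + 1)]; field_simp
    rw [heM] at hV
    rw [heM2]
    obtain ⟨V', hV'c, hV'⟩ := exists_cover hW he0
    set n := coveringNumber e W
    have hn : 0 < n := coveringNumber_pos hW hne he0
    have hn1 : (1 : ℝ) ≤ n := by exact_mod_cast hn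
    have hlog : 0 < Real.log (2 * (n : ℝ)) := Real.log_pos (by linarith)
    have hq : 0 < entropy W e := Real.sqrt_pos.2 hlog
    have hq2 : entropy W e ^ 2 = Real.log (2 * (n : ℝ)) := Real.sq_sqrt hlog.le
    classical
    set A := ((V' ×ˢ V).image fun p => p.1 - p.2).filter fun a => ‖a‖ ≤ 3 * e with hAdef
    have hAc : (A.card : ℝ) ≤ Real.exp (2 * entropy W e ^ 2) := by
      have h1 : A.card ≤ n * n := by
        refine (Finset.card_filter_le _ _).trans (Finset.card_image_le.trans ?_)
        rw [Finset.card_product, hV'c]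
        gcongr
      have h2 : Real.exp (2 * entropy W e ^ 2) = (2 * (n : ℝ)) ^ 2 := by
        rw [hq2, mul_comm, Real.exp_mul, Real.exp_log (by linarith)]
        norm_cast
      have h3 : (A.card : ℝ) ≤ n * n := by exact_mod_cast h1
      rw [h2]
      nlinarith
    obtain ⟨m', hm', hm's⟩ := exists_massart hN A (s := 3 * e) (by positivity) hq
      (fun a ha => (Finset.mem_filter.1 ha).2) hAc
    refine ⟨V', fun σ => m σ + m' σ, ?_, ?_, ?_⟩
    · rw [hV'c]
      exact coveringNumber_anti hW (by positivity) (by linarith)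
    · intro w hw
      obtain ⟨v, hv, hwv, hvm⟩ := hV w hw
      obtain ⟨v', hv', hwv'⟩ := hV' w hw
      refine ⟨v', hv', hwv'.le, fun σ => ?_⟩
      have hA : v' - v ∈ A := by
        refine Finset.mem_filter.2 ⟨Finset.mem_image.2
          ⟨(v', v), Finset.mem_product.2 ⟨hv', hv⟩, rfl⟩, ?_⟩
        rw [← dist_eq_norm]
        have := dist_triangle_left v' v w
        linarith
      have h1 := hm' σ _ hA
      rw [signedSum_sub] at h1
      linarith [hvm σ]
    · rw [Finset.sum_add_distrib, ← intervalIntegral.integral_add_adjacent_intervals (b := e)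
        (entropy_intervalIntegrable hW hne (by positivity) he0)
        (entropy_intervalIntegrable hW hne he0 (by positivity))]
      have h2 : e / 2 * entropy W e ≤ ∫ ε in (e / 2)..e, entropy W ε := by
        have h3 := intervalIntegral.integral_mono_on (a := e / 2) (b := e)
          (f := fun _ => entropy W e) (g := entropy W) (μ := MeasureTheory.volume) (by linarith)
          (by simp) (entropy_intervalIntegrable hW hne (by positivity) he0)
          (fun x hx => entropy_anti hW hne (by linarith [hx.1]) hx.2)
        rw [intervalIntegral.integral_const, smul_eq_mul] at h3
        linarith
      have h4 : (2 : ℝ) ^ N * (2 * (3 * e) * Real.sqrt N * entropy W e)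
          ≤ 2 ^ N * (12 * Real.sqrt N * ∫ ε in (e / 2)..e, entropy W ε) := by
        have := mul_le_mul_of_nonneg_left h2 (by positivity : 0 ≤ 2 ^ N * (12 * Real.sqrt N))
        linarith
      rw [mul_add, mul_add]
      linarith

/-- Lemma 5.6 of the paper (chaining / Dudley entropy integral bound, stated
conditionally on a fixed sample): if `0 ∈ F` and every `u ∈ F` is bounded by `B`,
then the empirical Rademacher complexity of `F` on any sample `Z₁,…,Z_N` is bounded by
`4δ + (12/√N) ∫_δ^B √(log(2 C(ε, F|_Z, d_∞))) dε` for every `δ ∈ (0, B)`. -/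
theorem stmt_3 {Ω : Type*} (B : ℝ) (hB : 0 < B)
    (F : Set (Ω → ℝ)) (h0 : (fun _ : Ω => (0 : ℝ)) ∈ F)
    (hbdd : ∀ u ∈ F, ∀ x : Ω, |u x| ≤ B)
    (N : ℕ) (hN : 0 < N) (Z : Fin N → Ω)
    (δ : ℝ) (hδ : 0 < δ) (hδB : δ < B) :
    empRademacher N F Z
      ≤ 4 * δ + (12 / Real.sqrt N) *
          ∫ ε in δ..B, Real.sqrt (Real.log (2 * (coveringNumber ε (restrictClass F Z) : ℝ))) := by
  set W := restrictClass F Z with hWdef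
  change _ ≤ 4 * δ + (12 / Real.sqrt N) * ∫ ε in δ..B, entropy W ε
  have hne : W.Nonempty := ⟨_, _, h0, rfl⟩
  have hWB : ∀ w ∈ W, ‖w‖ ≤ B := by
    rintro _ ⟨u, hu, rfl⟩
    exact (pi_norm_le_iff_of_nonneg hB.le).2 fun k => hbdd u hu (Z k)
  have hW : Bornology.IsBounded W := isBounded_iff_forall_norm_le.2 ⟨B, hWB⟩
  have hN' : (0 : ℝ) < N := by exact_mod_cast hN
  have hr : 0 < Real.sqrt N := Real.sqrt_pos.2 hN'
  have hr2 : Real.sqrt N * Real.sqrt N = N := Real.mul_self_sqrt hN'.le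
  have key : ∀ M : ℕ, empRademacher N F Z ≤ B / 2 ^ M +
      (12 / Real.sqrt N) * ∫ ε in (B / 2 ^ (M + 1))..(B / 2), entropy W ε := by
    intro M
    obtain ⟨V, m, -, hV, hm⟩ := exists_chain hN hB hne hWB hW M
    set I := ∫ ε in (B / 2 ^ (M + 1))..(B / 2), entropy W ε
    have : Nonempty F := ⟨⟨_, h0⟩⟩
    have h1 : ∀ σ ∈ (Finset.univ : Finset (Fin N → Bool)),
        (⨆ u : F, (1 / (N : ℝ)) * ∑ k, (if σ k then (1 : ℝ) else -1) * (u : Ω → ℝ) (Z k))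
          ≤ (1 / (N : ℝ)) * m σ + B / 2 ^ M := by
      intro σ _
      refine ciSup_le fun u => ?_
      obtain ⟨v, -, hd, hv⟩ := hV (fun k => (u : Ω → ℝ) (Z k)) ⟨u, u.2, rfl⟩
      rw [dist_eq_norm] at hd
      have h2 := signedSum_le σ _ hd
      rw [signedSum_sub] at h2
      have h3 : signedSum σ (fun k => (u : Ω → ℝ) (Z k)) ≤ m σ + N * (B / 2 ^ M) := by
        linarith [hv σ]
      calc (1 / (N : ℝ)) * signedSum σ (fun k => (u : Ω → ℝ) (Z k))
          ≤ (1 / (N : ℝ)) * (m σ + N * (B / 2 ^ M)) := by gcongr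
        _ = _ := by field_simp
    have h4 := Finset.sum_le_sum h1
    rw [Finset.sum_add_distrib, ← Finset.mul_sum, Finset.sum_const, Finset.card_univ,
      nsmul_eq_mul] at h4
    simp only [Fintype.card_fun, Fintype.card_bool, Fintype.card_fin, Nat.cast_pow,
      Nat.cast_ofNat] at h4
    unfold empRademacher
    calc _ ≤ (2 : ℝ)⁻¹ ^ N * ((1 / (N : ℝ)) * (2 ^ N * (12 * Real.sqrt N * I))
            + 2 ^ N * (B / 2 ^ M)) := by
          refine mul_le_mul_of_nonneg_left (h4.trans ?_) (by positivity)
          gcongr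
      _ = ((2 : ℝ)⁻¹ ^ N * 2 ^ N) * (B / 2 ^ M + (1 / (N : ℝ)) * (12 * Real.sqrt N * I)) := by ring
      _ = B / 2 ^ M + (12 / Real.sqrt N) * I := by
          rw [← mul_pow, inv_mul_cancel₀ two_ne_zero, one_pow, one_mul]
          congr 1
          nth_rewrite 1 [← hr2]
          field_simp
  have hnn : ∀ x, 0 ≤ entropy W x := fun x => Real.sqrt_nonneg _
  rcases le_or_gt δ (B / 2) with h | h
  · obtain ⟨M, hM1, hM2⟩ := exists_nat_pow_near (x := B / (2 * δ)) (y := 2)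
      (by rw [le_div_iff₀ (by positivity)]; linarith) one_lt_two
    rw [le_div_iff₀ (by positivity)] at hM1
    rw [div_lt_iff₀ (by positivity), pow_succ] at hM2
    have h5 : δ ≤ B / 2 ^ (M + 1) := by
      rw [le_div_iff₀ (by positivity), pow_succ]; linarith
    have h6 : B / 2 ^ M ≤ 4 * δ := by
      rw [div_le_iff₀ (by positivity)]; linarith
    have h7 : B / 2 ^ (M + 1) ≤ B / 2 := by
      gcongr
      exact le_self_pow₀ one_le_two (by omega)
    refine (key M).trans (add_le_add h6 (mul_le_mul_of_nonneg_left ?_ (by positivity)))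
    exact intervalIntegral.integral_mono_interval h5 h7 (by linarith)
      (Filter.Eventually.of_forall hnn) (entropy_intervalIntegrable hW hne hδ hB)
  · have h8 := key 0
    simp only [pow_zero, div_one, zero_add, pow_one, intervalIntegral.integral_same, mul_zero,
      add_zero] at h8
    have h9 : 0 ≤ ∫ ε in δ..B, entropy W ε :=
      intervalIntegral.integral_nonneg hδB.le fun x _ => hnn x
    have : 0 ≤ (12 / Real.sqrt N) * ∫ ε in δ..B, entropy W ε := by positivity
    linarith
end

section
/- Let n, m, d ∈ ℕ⁺ with n ≤ m and d ≥ 1, and let p₁,…,p_m be real polynomials in n variables, each of total degree at most d. Define s : ℝ → {0,1} by s(t) = 1 if t ≥ 0 and s(t) = 0 otherwise. Then the cardinality of the set { (s(p₁(x)), …, s(p_m(x))) : x ∈ ℝ^n } ⊆ {0,1}^m is at most 2 (2 e m d / n)^n. -/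
/-!
The bound proved is `#patterns ≤ (2 * d - 1)^n * #{S ⊆ {1,…,m} : |S| ≤ n}`, by an elementary
critical-point argument that assigns to each sign pattern a subset `S` and a critical point of a
polynomial of degree `2 * d` depending only on `S`.

Pick one point `y b` for each realized pattern `b`. Moving the thresholds slightly from `0` to
`c i`, the polynomials `q i = p i - c i` are nonzero at every `y b` with the sign prescribed by `b`.
With signs `s b i = ±1`, minimize
`τ * g + ∑ i, (max 0 (-(s b i * q i))) ^ 2`, where `g = ∑ l, (x l ^ (2 * d) + 2 * d * a l * x l)` is
coercive and `τ > 0` is small. If `x b` is a minimizer and `S b` is the set of indices with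
`s b i * q i (x b) ≤ 0`, then near `x b` the objective is bounded above by the polynomial
`τ * g + ∑ i ∈ S b, (q i) ^ 2`, with equality at `x b`, so `x b` is a critical point of the latter
(`exists_critical_point`).

* For generic `(a, c)`, no `q i` vanishes at such a critical point, and no `n + 1` of the `q i` have
  a common zero: the exceptional `(a, c)` lie in countably many smooth images of spaces of smaller
  dimension (`exists_generic_parameters`). The first fact makes `b ↦ (S b, x b)` injective. The
  second, by compactness, gives `|S b| ≤ n` once `τ` is small, since the penalty at `x b` is `O(τ)`.
* The critical equations for a given `S` have the form `τ' * (x l ^ (2 * d - 1) + a l) + h l x = 0` with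
  `deg (h l) ≤ 2 * d - 1`. For all but finitely many `τ'`, they have at most `(2 * d - 1)^n` solutions,
  because monomials with all exponents below `2 * d - 1` span the functions on the solution set
  (`finite_bad_parameters`).

Finally `#{S : |S| ≤ n} ≤ (e m / n)^n`.
-/

/-! ### Counting solutions of a perturbed diagonal system -/

open MvPolynomial in
/-- The span of the monomials in which every exponent is less than `D`. -/
noncomputable def reducedSpan (n D : ℕ) : Submodule ℝ (MvPolynomial (Fin n) ℝ) :=
  Submodule.span ℝ (Set.range fun f : Fin n → Fin D =>
    monomial (Finsupp.equivFunOnFinite.symm fun l => (f l : ℕ)) (1 : ℝ))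

open MvPolynomial in
lemma finrank_reducedSpan_le (n D : ℕ) : Module.finrank ℝ (reducedSpan n D) ≤ D ^ n := by
  refine (finrank_range_le_card (R := ℝ) _).trans (le_of_eq ?_)
  simp

instance (n D : ℕ) : FiniteDimensional ℝ (reducedSpan n D) :=
  FiniteDimensional.span_of_finite ℝ (Set.finite_range _)

open MvPolynomial in
/-- Division of a monomial by the system `X l ^ D + a l`. The degree condition on the quotients `A l`
says `deg (A l) + D ≤ k`; it is phrased through products with polynomials of degree at most `D` so
that it also covers `A l = 0`. -/
lemma monomial_reduction {n D : ℕ} (hD : 0 < D) (a : Fin n → ℝ) (k : ℕ) :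
    ∀ α : Fin n →₀ ℕ, α.degree = k →
    ∃ (A : Fin n → MvPolynomial (Fin n) ℝ) (r : MvPolynomial (Fin n) ℝ),
      (∀ l (h : MvPolynomial (Fin n) ℝ), h.totalDegree ≤ D → (A l * h).totalDegree ≤ k) ∧
      r ∈ reducedSpan n D ∧
      monomial α (1 : ℝ) = ∑ l, A l * (X l ^ D + C (a l)) + r := by
  induction k using Nat.strong_induction_on with
  | _ k ih =>
  intro α hα
  by_cases hred : ∀ l, α l < D
  · refine ⟨0, monomial α 1, by simp, Submodule.subset_span ⟨fun l => ⟨α l, hred l⟩, ?_⟩, by simp⟩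
    exact congrArg (fun β => monomial β (1 : ℝ)) (Finsupp.ext fun l => rfl)
  · push Not at hred
    obtain ⟨l, hl⟩ := hred
    obtain ⟨β, rfl⟩ : ∃ β, α = β + Finsupp.single l D := by
      refine ⟨α - Finsupp.single l D, (tsub_add_cancel_of_le ?_).symm⟩
      simpa using hl
    have hdeg : β.degree + D = k := by simpa using hα
    obtain ⟨A, r, hA, hr, hEq⟩ := ih β.degree (by omega) β rfl
    refine ⟨fun j => -(C (a l)) * A j + if j = l then monomial β 1 else 0, -(a l) • r, ?_,
      Submodule.smul_mem _ _ hr, ?_⟩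
    · intro j h hh
      rw [add_mul]
      refine (totalDegree_add _ _).trans (max_le ?_ ?_)
      · rw [mul_assoc, ← C_neg, C_mul']
        exact (totalDegree_smul_le _ _).trans ((hA j h hh).trans (by omega))
      · split_ifs
        · refine (totalDegree_mul _ _).trans ?_
          have : (monomial β (1 : ℝ)).totalDegree ≤ β.degree := totalDegree_monomial_le β (1 : ℝ)
          omega
        · simp
    · have h1 : monomial (β + Finsupp.single l D) (1 : ℝ)
          = monomial β 1 * (X l ^ D + C (a l)) - C (a l) * monomial β 1 := by
        rw [mul_add, X_pow_eq_monomial, monomial_mul]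
        simp; ring
      rw [h1]
      conv_lhs => rw [hEq]
      simp only [add_mul, Finset.sum_add_distrib, ite_mul, zero_mul, Finset.sum_ite_eq',
        Finset.mem_univ, if_true, mul_assoc, ← Finset.mul_sum]
      rw [hEq, neg_smul, smul_eq_C_mul]
      ring

open MvPolynomial in
lemma exists_interpolant {n : ℕ} (Z : Finset (Fin n → ℝ)) (z₀ : Fin n → ℝ) :
    ∃ q : MvPolynomial (Fin n) ℝ, q.totalDegree ≤ Z.card ∧ eval z₀ q = 1 ∧
      ∀ z ∈ Z, z ≠ z₀ → eval z q = 0 := by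
  classical
  have key : ∀ z : Fin n → ℝ, ∃ q : MvPolynomial (Fin n) ℝ, q.totalDegree ≤ 1 ∧
      eval z₀ q = 1 ∧ (z ≠ z₀ → eval z q = 0) := by
    intro z
    by_cases hz : z = z₀
    · exact ⟨1, by simp, by simp, fun h => absurd hz h⟩
    · obtain ⟨l, hl⟩ := Function.ne_iff.mp hz
      refine ⟨C ((z₀ l - z l)⁻¹) * (X l - C (z l)), ?_, ?_, ?_⟩
      · rw [C_mul']
        refine (totalDegree_smul_le _ _).trans ?_
        refine (totalDegree_sub _ _).trans (max_le ?_ ?_) <;> simp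
      · have : z₀ l - z l ≠ 0 := sub_ne_zero.mpr (Ne.symm hl)
        simp [this]
      · simp
  choose q h1 h2 h3 using key
  refine ⟨∏ z ∈ Z, q z, ?_, ?_, ?_⟩
  · refine (totalDegree_finsetProd _ _).trans ?_
    refine (Finset.sum_le_sum fun z _ => h1 z).trans ?_
    simp
  · simp [map_prod, h2]
  · intro z hz hne
    rw [map_prod]
    exact Finset.prod_eq_zero hz (h3 z hne)

open MvPolynomial in
/-- The division of `monomial_reduction` extends to linear maps with
`q = ∑ l, A l q * (X l ^ D + a l) + R q`. Put `T q = ∑ l, A l q * h l`, which preserves the space of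
polynomials of degree at most `D ^ n + 1`. At a solution of the system, `(τ + T) q` and `τ R q` take
the same value. Unless `-τ` is an eigenvalue of `T`, the map `τ + T` is onto, so reduced polynomials
interpolate arbitrary values on any `D ^ n + 1` solutions, against the dimension of the space they
span. -/
lemma finite_bad_parameters {n D : ℕ} (hD : 0 < D) (a : Fin n → ℝ)
    (h : Fin n → MvPolynomial (Fin n) ℝ) (hh : ∀ l, (h l).totalDegree ≤ D) :
    {τ : ℝ | ¬ ∀ Z : Finset (Fin n → ℝ),
      (∀ z ∈ Z, ∀ l, τ * (z l ^ D + a l) + eval z (h l) = 0) → Z.card ≤ D ^ n}.Finite := by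
  classical
  choose A r hA hr hAr using fun α => monomial_reduction hD a _ α rfl
  let b := basisMonomials (Fin n) ℝ
  let T : MvPolynomial (Fin n) ℝ →ₗ[ℝ] MvPolynomial (Fin n) ℝ :=
    b.constr ℝ fun α => ∑ l, A α l * h l
  let R : MvPolynomial (Fin n) ℝ →ₗ[ℝ] MvPolynomial (Fin n) ℝ := b.constr ℝ r
  have hT : ∀ α, T (monomial α 1) = ∑ l, A α l * h l := fun α => by
    simpa [b] using b.constr_basis ℝ (fun α => ∑ l, A α l * h l) α
  have hR : ∀ α, R (monomial α 1) = r α := fun α => by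
    simpa [b] using b.constr_basis ℝ r α
  have hRmem : ∀ q, R q ∈ reducedSpan n D := by
    intro q
    induction q using MvPolynomial.induction_on' with
    | monomial α c =>
      have : monomial α c = c • monomial α (1 : ℝ) := by simp [smul_monomial]
      rw [this, map_smul, hR]
      exact Submodule.smul_mem _ _ (hr α)
    | add p q hp hq => rw [map_add]; exact Submodule.add_mem _ hp hq
  set E := D ^ n + 1 with hE
  let V := restrictTotalDegree (Fin n) ℝ E
  have : FiniteDimensional ℝ V := inferInstance
  have hTV : ∀ q ∈ V, T q ∈ V := by
    intro q hq
    rw [q.as_sum, map_sum]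
    refine Submodule.sum_mem _ fun α hα => ?_
    have : monomial α (coeff α q) = coeff α q • monomial α (1 : ℝ) := by simp [smul_monomial]
    rw [this, map_smul, hT]
    refine Submodule.smul_mem _ _ (Submodule.sum_mem _ fun l _ => ?_)
    rw [mem_restrictTotalDegree] at hq ⊢
    exact (hA α l _ (hh l)).trans ((le_totalDegree hα).trans hq)
  have hkey : ∀ (τ : ℝ) (z : Fin n → ℝ), (∀ l, τ * (z l ^ D + a l) + eval z (h l) = 0) →
      ∀ q, eval z (τ • q + T q) = τ * eval z (R q) := by
    intro τ z hz q
    induction q using MvPolynomial.induction_on' with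
    | monomial α c =>
      have : monomial α c = c • monomial α (1 : ℝ) := by simp [smul_monomial]
      rw [this, map_smul, map_smul, hR, hT]
      have e := congrArg (eval z) (hAr α)
      simp only [map_add, map_sum, map_mul, map_pow, eval_X, eval_C] at e
      simp only [map_add, map_sum, map_mul, smul_eval]
      rw [e]
      have : ∑ l, eval z (A α l) * eval z (h l)
          = - (τ * ∑ l, eval z (A α l) * (z l ^ D + a l)) := by
        rw [Finset.mul_sum, ← Finset.sum_neg_distrib]
        refine Finset.sum_congr rfl fun l _ => ?_
        linear_combination (eval z (A α l)) * hz l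
      rw [this]; ring
    | add p q hp hq =>
      simp only [map_add, smul_eval, mul_add] at hp hq ⊢
      linear_combination hp + hq
  let TV : Module.End ℝ V := T.restrict hTV
  refine Set.Finite.subset ((TV.finite_hasEigenvalue).preimage (neg_injective.injOn)) ?_
  intro τ hτ
  by_contra hne
  apply hτ
  intro Z₀ hZ₀
  by_contra hcard
  push Not at hcard
  obtain ⟨Z, hZZ, hZc⟩ := Finset.exists_subset_card_eq (Nat.succ_le_of_lt hcard)
  have hZ : ∀ z ∈ Z, ∀ l, τ * (z l ^ D + a l) + eval z (h l) = 0 :=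
    fun z hz => hZ₀ z (hZZ hz)
  have hinj : Function.Injective (τ • (LinearMap.id : V →ₗ[ℝ] V) + TV : V →ₗ[ℝ] V) := by
    rw [← LinearMap.ker_eq_bot]
    by_contra hb
    apply hne
    show TV.HasEigenvalue (-τ)
    rw [Module.End.hasEigenvalue_iff]
    intro hbot
    apply hb
    rw [← hbot, Module.End.eigenspace_def]
    congr 1
    ext v : 1
    simp [add_comm]
  have hsurj := LinearMap.injective_iff_surjective.mp hinj
  let ev : reducedSpan n D →ₗ[ℝ] (Z → ℝ) :=
    { toFun := fun q z => eval z.1 q.1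
      map_add' := fun _ _ => by ext; simp
      map_smul' := fun _ _ => by ext; simp [smul_eval] }
  have hev : Function.Surjective ev := by
    rw [← LinearMap.range_eq_top, eq_top_iff, ← (Pi.basisFun ℝ Z).span_eq, Submodule.span_le]
    rintro _ ⟨z₀, rfl⟩
    obtain ⟨q, hq1, hq2, hq3⟩ := exists_interpolant Z z₀.1
    obtain ⟨w, hw⟩ := hsurj ⟨q, by rw [mem_restrictTotalDegree]; omega⟩
    refine ⟨⟨τ • R w.1, Submodule.smul_mem _ _ (hRmem _)⟩, ?_⟩
    have hw' : τ • w.1 + T w.1 = q := congrArg Subtype.val hw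
    ext z
    have := hkey τ z.1 (hZ z.1 z.2) w.1
    rw [hw'] at this
    show eval z.1 (τ • R w.1) = _
    rw [smul_eval, ← this, Pi.basisFun_apply]
    by_cases hzz : z = z₀
    · subst hzz; simp [hq2]
    · rw [hq3 z.1 z.2 (fun h => hzz (Subtype.ext h)), Pi.single_eq_of_ne hzz]
  have h1 := LinearMap.finrank_le_finrank_of_surjective (f := ev) hev
  have h2 := finrank_reducedSpan_le n D
  simp only [Module.finrank_fintype_fun_eq_card, Fintype.card_coe] at h1
  omega

/-! ### Generic parameters -/

open MvPolynomial in
lemma totalDegree_pderiv_add_one_le {n d : ℕ} (hd : 1 ≤ d) (l : Fin n)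
    {p : MvPolynomial (Fin n) ℝ} (hp : p.totalDegree ≤ d) :
    (pderiv l p).totalDegree + 1 ≤ d := by
  rw [p.as_sum, map_sum]
  suffices h : (∑ α ∈ p.support, pderiv l (monomial α (coeff α p))).totalDegree ≤ d - 1 by omega
  refine totalDegree_finsetSum_le fun α hα => ?_
  rw [pderiv_monomial]
  by_cases hl : α l = 0
  · simp [hl]
  · refine (totalDegree_monomial_le _ _).trans ?_
    have h1 : α.degree ≤ d := (le_totalDegree hα).trans hp
    have h2 : α = (α - Finsupp.single l 1) + Finsupp.single l 1 := by
      refine (tsub_add_cancel_of_le ?_).symm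
      simpa using Nat.one_le_iff_ne_zero.mpr hl
    have h3 := congrArg Finsupp.degree h2
    rw [map_add, Finsupp.degree_single] at h3
    show (α - Finsupp.single l 1).degree ≤ d - 1
    omega

/-- The `l`-th partial derivative of `∑ i ∈ S, (p i - c i) ^ 2`. -/
noncomputable def penaltyGrad {n m : ℕ} (p : Fin m → MvPolynomial (Fin n) ℝ) (S : Finset (Fin m))
    (c : Fin m → ℝ) (l : Fin n) : MvPolynomial (Fin n) ℝ :=
  ∑ i ∈ S, 2 * (p i - MvPolynomial.C (c i)) * MvPolynomial.pderiv l (p i)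

open MvPolynomial in
lemma totalDegree_penaltyGrad_le {n m d : ℕ} (hd : 1 ≤ d) (p : Fin m → MvPolynomial (Fin n) ℝ)
    (hdeg : ∀ i, (p i).totalDegree ≤ d) (S : Finset (Fin m)) (c : Fin m → ℝ) (l : Fin n) :
    (penaltyGrad p S c l).totalDegree ≤ 2 * d - 1 := by
  refine totalDegree_finsetSum_le fun i _ => ?_
  have h1 := totalDegree_pderiv_add_one_le hd l (hdeg i)
  have h2 : (p i - C (c i)).totalDegree ≤ d := by
    refine (totalDegree_sub _ _).trans (max_le (hdeg i) ?_)
    simp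
  have h3 := totalDegree_mul (2 * (p i - C (c i))) (pderiv l (p i))
  have h4 := totalDegree_mul (2 : MvPolynomial (Fin n) ℝ) (p i - C (c i))
  have h5 : (2 : MvPolynomial (Fin n) ℝ).totalDegree = 0 := by
    rw [show (2 : MvPolynomial (Fin n) ℝ) = C 2 from (map_ofNat C 2).symm]; exact totalDegree_C _
  omega

lemma contDiff_eval {n : ℕ} (p : MvPolynomial (Fin n) ℝ) :
    ContDiff ℝ 1 fun x : Fin n → ℝ => MvPolynomial.eval x p :=
  (AnalyticOnNhd.eval_mvPolynomial (𝕜 := ℝ) p).contDiff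

open MvPolynomial in
/-- If `x` solves the critical equations and `p i` takes the value `c i` at `x`, then `a` and `c i` are
smooth functions of `x` and the other `c j`, so `(a, c)` is in the image of a space of dimension
`n + m - 1`. If `p i x = c i` for all `i` in a set `T` of size `n + 1`, then `(a, c)` is a smooth
function of `x`, `a` and the `m - n - 1` values `c j` with `j ∉ T`. Countably many such images do not
cover a nonempty open set. -/
lemma exists_generic_parameters {n m : ℕ} (D : ℕ) (κ : ℕ → ℝ) (hκ : ∀ N, κ N ≠ 0)
    (p : Fin m → MvPolynomial (Fin n) ℝ)
    (U : Set (Fin m → ℝ)) (hU : IsOpen U) (hUne : U.Nonempty) :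
    ∃ (a : Fin n → ℝ) (c : Fin m → ℝ), c ∈ U ∧
      (∀ N S x, (∀ l, κ N * (x l ^ D + a l) + eval x (penaltyGrad p S c l) = 0) →
        ∀ i, eval x (p i) ≠ c i) ∧
      (∀ T : Finset (Fin m), T.card = n + 1 → ∀ x, ∃ i ∈ T, eval x (p i) ≠ c i) := by
  classical
  -- the vector equal to `c'` off `T`, and to the values `p j x` on `T`
  let mk : (T : Finset (Fin m)) → (Fin n → ℝ) → ({j // j ∉ T} → ℝ) → Fin m → ℝ :=
    fun T x c' j => if h : j ∈ T then eval x (p j) else c' ⟨j, h⟩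
  have mk_eq : ∀ T x c, (∀ i ∈ T, eval x (p i) = c i) → mk T x (fun j => c j.1) = c := by
    intro T x c h
    ext j
    by_cases hj : j ∈ T
    · simp [mk, hj, h j hj]
    · simp [mk, hj]
  let f₁ : ℕ × Finset (Fin m) × Fin m → Set ((Fin n → ℝ) × (Fin m → ℝ)) := fun q =>
    Set.range fun w : (Fin n → ℝ) × ({j // j ∉ ({q.2.2} : Finset (Fin m))} → ℝ) =>
      ((fun l => - w.1 l ^ D - (κ q.1)⁻¹ * ∑ i ∈ q.2.1,
        2 * (eval w.1 (p i) - mk {q.2.2} w.1 w.2 i) * eval w.1 (pderiv l (p i))),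
        mk {q.2.2} w.1 w.2)
  let f₂ : {T : Finset (Fin m) // T.card = n + 1} → Set ((Fin n → ℝ) × (Fin m → ℝ)) := fun T =>
    Set.range fun w : ((Fin n → ℝ) × (Fin n → ℝ)) × ({j // j ∉ T.1} → ℝ) =>
      (w.1.2, mk T.1 w.1.1 w.2)
  have hfin : Module.finrank ℝ ((Fin n → ℝ) × (Fin m → ℝ)) = n + m := by simp
  have hmk : ∀ (T : Finset (Fin m)) (j : Fin m),
      ContDiff ℝ 1 fun w : (Fin n → ℝ) × ({j // j ∉ T} → ℝ) => mk T w.1 w.2 j := by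
    intro T j
    by_cases hj : j ∈ T
    · simp only [mk, hj, dite_true]
      exact (contDiff_eval (p j)).comp contDiff_fst
    · simp only [mk, hj, dite_false]
      exact (contDiff_apply ℝ ℝ _).comp contDiff_snd
  have hcard : ∀ T : Finset (Fin m), Fintype.card {j // j ∉ T} + T.card = m := by
    intro T
    have h1 : Fintype.card {j // j ∉ T} = m - T.card := by simp
    have h2 : T.card ≤ m := by simpa using T.card_le_univ
    omega
  have h₁ : ∀ q, dimH (f₁ q) ≤ ((n + m - 1 : ℕ) : ENNReal) := by
    rintro ⟨N, S, i⟩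
    refine (ContDiff.dimH_range_le ?_).trans ?_
    · refine ContDiff.prodMk (contDiff_pi.mpr fun l => ?_) (contDiff_pi.mpr fun j => hmk _ j)
      refine ContDiff.sub ?_ (contDiff_const.mul (ContDiff.sum fun j _ => ?_))
      · exact (((contDiff_apply ℝ ℝ l).comp contDiff_fst).pow D).neg
      · refine ContDiff.mul (contDiff_const.mul (ContDiff.sub ?_ (hmk _ j))) ?_
        · exact (contDiff_eval (p j)).comp contDiff_fst
        · exact (contDiff_eval _).comp contDiff_fst
    · have : Fintype.card {j // j ∉ ({(N, S, i).2.2} : Finset (Fin m))} + 1 = m := by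
        simpa only [Finset.card_singleton] using hcard {i}
      rw [Module.finrank_prod, Module.finrank_fintype_fun_eq_card,
        Module.finrank_fintype_fun_eq_card, Fintype.card_fin]
      exact_mod_cast (by omega)
  have h₂ : ∀ T, dimH (f₂ T) ≤ ((n + m - 1 : ℕ) : ENNReal) := by
    rintro ⟨T, hT⟩
    refine (ContDiff.dimH_range_le ?_).trans ?_
    · refine ContDiff.prodMk (contDiff_snd.comp contDiff_fst) (contDiff_pi.mpr fun j => ?_)
      exact (hmk T j).comp ((contDiff_fst.comp contDiff_fst).prodMk contDiff_snd)
    · have : Fintype.card {j // j ∉ (⟨T, hT⟩ : {T : Finset (Fin m) // T.card = n + 1}).1}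
          + T.card = m := hcard T
      rw [Module.finrank_prod, Module.finrank_prod, Module.finrank_fintype_fun_eq_card,
        Module.finrank_fintype_fun_eq_card, Fintype.card_fin]
      exact_mod_cast (by omega)
  -- for `m = 0` the truncated bound `n + m - 1` may fail to be less than `n + m`
  rcases Nat.eq_zero_or_pos m with hm0 | hmpos
  · obtain ⟨c, hc⟩ := hUne
    subst hm0
    refine ⟨0, c, hc, fun _ _ _ _ i => i.elim0, fun T hT => ?_⟩
    have := hcard T
    omega
  have hdense : Dense ((⋃ q, f₁ q) ∪ ⋃ T, f₂ T)ᶜ := by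
    apply dense_compl_of_dimH_lt_finrank
    rw [dimH_union, dimH_iUnion, dimH_iUnion, hfin]
    refine lt_of_le_of_lt (max_le (iSup_le h₁) (iSup_le h₂)) ?_
    exact_mod_cast (by omega)
  obtain ⟨⟨a, c⟩, hac, -, hc⟩ := hdense.exists_mem_open
    (isOpen_univ.prod hU) (Set.univ_nonempty.prod hUne)
  simp only [Set.mem_compl_iff, Set.mem_union, not_or, Set.mem_iUnion, not_exists] at hac
  refine ⟨a, c, hc, ?_, ?_⟩
  · intro N S x hx i hi
    apply hac.1 (N, S, i)
    have e := mk_eq {i} x c (by simpa using hi)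
    refine ⟨(x, fun j => c j.1), ?_⟩
    simp only [e]
    refine Prod.ext ?_ rfl
    ext l
    have := hx l
    simp only [penaltyGrad, map_sum, map_mul, map_sub, eval_C, map_ofNat] at this
    have hk := hκ N
    have h2 : ∑ i ∈ S, 2 * ((eval x) (p i) - c i) * (eval x) ((pderiv l) (p i))
      = - (κ N * (x l ^ D + a l)) := by linear_combination this
    simp only [h2]
    field_simp
    ring
  · intro T hT x
    by_contra hcon
    push Not at hcon
    apply hac.2 ⟨T, hT⟩
    exact ⟨((x, a), fun j => c j.1), by simp only [mk_eq T x c hcon]⟩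

/-! ### Penalized minimization -/

open MvPolynomial in
lemma hasDerivAt_eval_update {n : ℕ} (x : Fin n → ℝ) (l : Fin n) (p : MvPolynomial (Fin n) ℝ) :
    HasDerivAt (fun t : ℝ => eval (Function.update x l t) p) (eval x (pderiv l p)) (x l) := by
  induction p using MvPolynomial.induction_on with
  | C c => simpa using hasDerivAt_const (x l) c
  | add p q hp hq => simpa using! hp.add hq
  | mul_X p j hp =>
    have hX : HasDerivAt (fun t : ℝ => Function.update x l t j)
        (if j = l then 1 else 0) (x l) := by
      by_cases hj : j = l
      · subst hj; simpa using! hasDerivAt_id (x j)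
      · simpa [hj, Function.update_of_ne hj] using hasDerivAt_const (x l) (x j)
    have := hp.mul hX
    simp only [map_mul, eval_X]
    convert! this using 1
    rw [Derivation.leibniz, pderiv_X]
    by_cases hj : j = l
    · subst hj; simp; ring
    · simp [hj]; ring

/-- The coercive function `g` of the penalization, with partial derivatives
`2 * d * (x l ^ (2 * d - 1) + a l)`. -/
noncomputable def coerciveFun {n : ℕ} (d : ℕ) (a x : Fin n → ℝ) : ℝ :=
  ∑ l, (x l ^ (2 * d) + 2 * d * a l * x l)

lemma continuous_coerciveFun {n : ℕ} (d : ℕ) (a : Fin n → ℝ) :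
    Continuous (coerciveFun d a) := by
  unfold coerciveFun; fun_prop

lemma coerciveFun_ge {n d : ℕ} (hd : 1 ≤ d) (a x : Fin n → ℝ) :
    ∑ l, (x l ^ 2 / 2) - ∑ l, (1 + 2 * (d * a l) ^ 2) ≤ coerciveFun d a x := by
  rw [← Finset.sum_sub_distrib]
  refine Finset.sum_le_sum fun l _ => ?_
  have h1 : x l ^ 2 - 1 ≤ x l ^ (2 * d) := by
    rw [pow_mul]
    rcases le_total 1 (x l ^ 2) with h | h
    · have := le_self_pow₀ h (by omega : d ≠ 0)
      linarith
    · have : 0 ≤ (x l ^ 2) ^ d := by positivity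
      linarith
  nlinarith [sq_nonneg (x l + 2 * (d * a l))]

lemma isCompact_sublevel {n d : ℕ} (hd : 1 ≤ d) (a : Fin n → ℝ) (M : ℝ) :
    IsCompact {x : Fin n → ℝ | coerciveFun d a x ≤ M} := by
  set B := 2 * (M + ∑ l, (1 + 2 * (d * a l) ^ 2)) with hB
  refine IsCompact.of_isClosed_subset
    (isCompact_Icc (a := fun _ : Fin n => -(B + 1)) (b := fun _ => B + 1))
    (isClosed_le (continuous_coerciveFun d a) continuous_const) ?_
  intro x hx
  have h1 := coerciveFun_ge hd a x
  have h2 : ∀ l, x l ^ 2 ≤ B := by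
    intro l
    have : x l ^ 2 / 2 ≤ ∑ l, (x l ^ 2 / 2) :=
      Finset.single_le_sum (f := fun l => x l ^ 2 / 2) (fun _ _ => by positivity)
        (Finset.mem_univ l)
    have hx' : coerciveFun d a x ≤ M := hx
    linarith
  exact ⟨fun l => by nlinarith [h2 l, sq_nonneg (x l + 1)],
    fun l => by nlinarith [h2 l, sq_nonneg (x l - 1)]⟩

open MvPolynomial in
/-- Minimization of `τ * g + ∑ i, (max 0 (-(s i * (p i - c i)))) ^ 2`, compared with its value at a
point `y` where the penalty vanishes. -/
lemma exists_critical_point {n m d : ℕ} (hd : 1 ≤ d) (p : Fin m → MvPolynomial (Fin n) ℝ)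
    (a : Fin n → ℝ) (c : Fin m → ℝ) {τ : ℝ} (hτ : 0 < τ) (s : Fin m → ℝ)
    (hs : ∀ i, s i ^ 2 = 1) (y : Fin n → ℝ) (hy : ∀ i, 0 < s i * (eval y (p i) - c i)) :
    ∃ (x : Fin n → ℝ) (S : Finset (Fin m)),
      (∀ i, i ∈ S ↔ s i * (eval x (p i) - c i) ≤ 0) ∧
      coerciveFun d a x ≤ coerciveFun d a y ∧
      ∑ i ∈ S, (eval x (p i) - c i) ^ 2 ≤ τ * (coerciveFun d a y - coerciveFun d a x) ∧
      ∀ l, 2 * d * τ * (x l ^ (2 * d - 1) + a l) + eval x (penaltyGrad p S c l) = 0 := by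
  classical
  let q : Fin m → (Fin n → ℝ) → ℝ := fun i x => eval x (p i) - c i
  have hq : ∀ i, Continuous (q i) := fun i => (MvPolynomial.continuous_eval _).sub continuous_const
  let pen : (Fin n → ℝ) → ℝ := fun x => ∑ i, (max 0 (-(s i * q i x))) ^ 2
  have hpen : Continuous pen := continuous_finsetSum _ fun i _ =>
    (continuous_const.max ((continuous_const.mul (hq i)).neg)).pow 2
  have hpen0 : ∀ x, 0 ≤ pen x := fun x => Finset.sum_nonneg fun i _ => by positivity
  have hpeny : pen y = 0 := by
    refine Finset.sum_eq_zero fun i _ => ?_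
    rw [max_eq_left (by linarith [hy i])]; simp
  let G : (Fin n → ℝ) → ℝ := fun x => τ * coerciveFun d a x + pen x
  have hG : Continuous G := (continuous_const.mul (continuous_coerciveFun d a)).add hpen
  obtain ⟨x, hxK, hxmin⟩ := (isCompact_sublevel hd a (coerciveFun d a y)).exists_isMinOn
    ⟨y, le_refl (coerciveFun d a y)⟩ hG.continuousOn
  have hGy : G x ≤ G y := hxmin (le_refl (coerciveFun d a y))
  have hmin : ∀ z, G x ≤ G z := by
    intro z
    by_cases hz : coerciveFun d a z ≤ coerciveFun d a y
    · exact hxmin hz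
    · push Not at hz
      have : τ * coerciveFun d a y ≤ τ * coerciveFun d a z := by gcongr
      have := hpen0 z
      simp only [G] at hGy ⊢
      linarith
  let S : Finset (Fin m) := Finset.univ.filter fun i => s i * q i x ≤ 0
  have hS : ∀ i, i ∈ S ↔ s i * (eval x (p i) - c i) ≤ 0 := fun i => by simp [S, q]
  have hle : ∀ i z, (max 0 (-(s i * q i z))) ^ 2 ≤ q i z ^ 2 := by
    intro i z
    have h1 : q i z ^ 2 = (s i * q i z) ^ 2 := by rw [mul_pow, hs, one_mul]
    rw [h1]
    rcases le_total 0 (-(s i * q i z)) with h | h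
    · rw [max_eq_right h, neg_sq]
    · rw [max_eq_left h]; nlinarith [sq_nonneg (s i * q i z)]
  have hpenx : pen x = ∑ i ∈ S, q i x ^ 2 := by
    simp only [pen]
    rw [← Finset.sum_filter_add_sum_filter_not Finset.univ (fun i => s i * q i x ≤ 0)
      (fun i => (max 0 (-(s i * q i x))) ^ 2)]
    rw [Finset.sum_eq_zero (s := Finset.univ.filter fun i => ¬ s i * q i x ≤ 0), add_zero]
    · refine Finset.sum_congr rfl fun i hi => ?_
      have hi' : s i * q i x ≤ 0 := (hS i).mp hi
      rw [max_eq_right (by linarith), neg_sq, mul_pow, hs, one_mul]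
    · intro i hi
      have : 0 < s i * q i x := not_le.mp (Finset.mem_filter.mp hi).2
      rw [max_eq_left (by linarith)]; simp
  -- `F` dominates `G` near `x`, with equality at `x`: indices with `s i * q i x = 0` are kept in `S`
  -- so that only indices with vanishing penalty near `x` are dropped
  let F : MvPolynomial (Fin n) ℝ :=
    C τ * ∑ l, (X l ^ (2 * d) + C (2 * d * a l) * X l) + ∑ i ∈ S, (p i - C (c i)) ^ 2
  have hF : ∀ z, eval z F = τ * coerciveFun d a z + ∑ i ∈ S, q i z ^ 2 := by
    intro z; simp [F, coerciveFun, q]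
  have hloc : ∀ᶠ z in nhds x, eval x F ≤ eval z F := by
    have hpos : ∀ᶠ z in nhds x, ∀ i, i ∉ S → 0 < s i * q i z := by
      rw [Filter.eventually_all]
      intro i
      by_cases hi : i ∈ S
      · simp [hi]
      · have h0 : 0 < s i * q i x := not_le.mp fun h => hi ((hS i).mpr h)
        have hc : Continuous fun z => s i * q i z := continuous_const.mul (hq i)
        filter_upwards [hc.continuousAt.eventually (lt_mem_nhds h0)] with z hz _ using hz
    filter_upwards [hpos] with z hz
    have h1 := hmin z
    have h2 : pen z ≤ ∑ i ∈ S, q i z ^ 2 := by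
      have : pen z = ∑ i ∈ S, (max 0 (-(s i * q i z))) ^ 2 := by
        symm
        refine Finset.sum_subset (Finset.subset_univ _) fun i _ hi => ?_
        rw [max_eq_left (by linarith [hz i hi])]; simp
      rw [this]
      exact Finset.sum_le_sum fun i _ => hle i z
    rw [hF, hF, ← hpenx]
    simp only [G] at h1
    linarith
  refine ⟨x, S, hS, hxK, ?_, fun l => ?_⟩
  · have : ∑ i ∈ S, (eval x (p i) - c i) ^ 2 = pen x := hpenx.symm
    rw [this]
    simp only [G] at hGy
    linarith
  · have hlm : IsLocalMin (fun t : ℝ => eval (Function.update x l t) F) (x l) := by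
      have hc : ContinuousAt (fun t : ℝ => Function.update x l t) (x l) :=
        (continuous_const.update l continuous_id).continuousAt
      have h0 : Filter.Tendsto (fun t : ℝ => Function.update x l t) (nhds (x l)) (nhds x) := by
        simpa [ContinuousAt] using hc
      filter_upwards [h0.eventually hloc] with t ht
      simpa using ht
    have h := hlm.hasDerivAt_eq_zero (hasDerivAt_eval_update x l F)
    have hd1 : ∀ j, eval x (pderiv l (X j ^ (2 * d) + C (2 * d * a j) * X j))
        = if j = l then 2 * d * (x l ^ (2 * d - 1) + a l) else 0 := by
      intro j
      rw [map_add, pderiv_C_mul, pderiv_pow, pderiv_X]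
      by_cases hj : j = l
      · subst hj; simp; ring
      · simp [hj]
    have hd2 : ∀ i, eval x (pderiv l ((p i - C (c i)) ^ 2))
        = eval x (2 * (p i - C (c i)) * pderiv l (p i)) := by
      intro i
      rw [pderiv_pow, map_sub, pderiv_C]
      simp
    simp only [F] at h
    rw [map_add (pderiv l), pderiv_C_mul, map_sum (pderiv l), map_sum (pderiv l), map_add, map_mul,
      map_sum, map_sum, eval_C] at h
    simp only [hd1, hd2, Finset.sum_ite_eq', Finset.mem_univ, if_true] at h
    simp only [penaltyGrad, map_sum]
    linarith

/-! ### The count -/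

/-- Weighting each `S` by `(n / m) ^ |S|`, the total over all subsets is `(1 + n / m) ^ m ≤ e ^ n`,
while each `S` with `|S| ≤ n` contributes at least `(n / m) ^ n`. -/
lemma card_small_subsets_le {n m : ℕ} (hn : 0 < n) (hnm : n ≤ m) :
    ((Finset.univ.filter fun S : Finset (Fin m) => S.card ≤ n).card : ℝ)
      ≤ (Real.exp 1 * m / n) ^ n := by
  have hn' : (0 : ℝ) < n := by exact_mod_cast hn
  have hm' : (0 : ℝ) < m := by exact_mod_cast hn.trans_le hnm
  set t : ℝ := n / m with ht
  have ht0 : 0 < t := by positivity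
  have ht1 : t ≤ 1 := by rw [ht, div_le_one hm']; exact_mod_cast hnm
  have h1 : ((Finset.univ.filter fun S : Finset (Fin m) => S.card ≤ n).card : ℝ) * t ^ n
      ≤ (t + 1) ^ m := by
    have := Fintype.sum_pow_mul_eq_add_pow (Fin m) t 1
    rw [Fintype.card_fin] at this
    rw [← this, ← nsmul_eq_mul, ← Finset.sum_const]
    refine (Finset.sum_le_sum (g := fun S : Finset (Fin m) => t ^ S.card * 1 ^ (m - S.card))
      fun S hS => ?_).trans
      (Finset.sum_le_sum_of_subset_of_nonneg (Finset.subset_univ _) fun S _ _ => by positivity)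
    rw [one_pow, mul_one]
    exact pow_le_pow_of_le_one ht0.le ht1 (Finset.mem_filter.mp hS).2
  have h2 : (t + 1) ^ m ≤ Real.exp 1 ^ n := by
    calc (t + 1) ^ m ≤ Real.exp t ^ m := by
          gcongr; exact Real.add_one_le_exp t
      _ = Real.exp 1 ^ n := by
          rw [← Real.exp_nat_mul, ← Real.exp_nat_mul, ht]; congr 1; field_simp
  have h3 : (Real.exp 1 * m / n) ^ n = Real.exp 1 ^ n / t ^ n := by
    rw [← div_pow, ht]; congr 1; field_simp
  rw [h3, le_div_iff₀ (by positivity)]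
  exact h1.trans h2

open MvPolynomial in
lemma card_patterns_le {n m d : ℕ} (hd : 1 ≤ d) (p : Fin m → MvPolynomial (Fin n) ℝ)
    (hdeg : ∀ i, (p i).totalDegree ≤ d) (P : Finset (Fin m → Bool))
    (hP : ∀ b ∈ P, ∃ x : Fin n → ℝ, ∀ i, (b i = true ↔ 0 ≤ eval x (p i))) :
    P.card ≤ (Finset.univ.filter fun S : Finset (Fin m) => S.card ≤ n).card
      * (2 * d - 1) ^ n := by
  classical
  choose! y hy using hP
  let s : (Fin m → Bool) → Fin m → ℝ := fun b i => if b i = true then 1 else -1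
  have hs : ∀ b i, s b i ^ 2 = 1 := fun b i => by simp only [s]; split_ifs <;> norm_num
  have hs_inj : ∀ b b', (∀ i, 0 < s b i ↔ 0 < s b' i) → b = b' := by
    intro b b' h
    ext i
    have := h i
    simp only [s] at this
    rcases hb : b i <;> rcases hb' : b' i <;> simp [hb, hb'] at this ⊢ <;> linarith
  -- thresholds separating the representatives strictly
  let U : Set (Fin m → ℝ) := ⋂ b ∈ P, ⋂ i, {c | 0 < s b i * (eval (y b) (p i) - c i)}
  have hUopen : IsOpen U :=
    isOpen_biInter_finset fun b _ => isOpen_iInter_of_finite fun i =>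
      isOpen_lt continuous_const (by fun_prop)
  have hUne : U.Nonempty := by
    have : ∀ᶠ η in nhdsWithin (0 : ℝ) (Set.Ioi 0), ∀ b ∈ P, ∀ i,
        0 < s b i * (eval (y b) (p i) - (-η)) := by
      rw [Filter.eventually_all_finset]
      intro b hb
      rw [Filter.eventually_all]
      intro i
      by_cases hbi : b i = true
      · have h0 := (hy b hb i).mp hbi
        filter_upwards [self_mem_nhdsWithin] with η hη
        have : (0 : ℝ) < η := hη
        simp only [s, hbi, if_true]; linarith
      · have h0 : eval (y b) (p i) < 0 := not_le.mp fun h => hbi ((hy b hb i).mpr h)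
        have h1 : ∀ᶠ η in nhds (0 : ℝ), η < - eval (y b) (p i) := gt_mem_nhds (by linarith)
        filter_upwards [h1.filter_mono nhdsWithin_le_nhds] with η hη
        simp only [s, hbi]
        simp; linarith
    obtain ⟨η, hη⟩ := this.exists
    exact ⟨fun _ => -η, by simpa only [U, Set.mem_iInter] using! hη⟩
  have hd0 : (0 : ℝ) < d := by exact_mod_cast hd
  -- `τ` ranges over a sequence because genericity handles only countably many values, while the
  -- choice of `τ` depends on `(a, c)`
  let τ : ℕ → ℝ := fun N => 1 / ((N : ℝ) + 1)
  have hτ : ∀ N, 0 < τ N := fun N => by simp only [τ]; positivity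
  obtain ⟨a, c, hcU, hgen, hgen'⟩ := exists_generic_parameters (2 * d - 1)
    (fun N => 2 * d * τ N) (fun N => by have := hτ N; positivity) p U hUopen hUne
  have hyc : ∀ b ∈ P, ∀ i, 0 < s b i * (eval (y b) (p i) - c i) := by
    simpa only [U, Set.mem_iInter] using! hcU
  obtain ⟨M, hM⟩ : ∃ M, ∀ b, coerciveFun d a (y b) ≤ M :=
    let ⟨M, hM⟩ := (Set.finite_range fun b => coerciveFun d a (y b)).bddAbove
    ⟨M, fun b => hM ⟨b, rfl⟩⟩
  set B := ∑ l, (1 + 2 * (d * a l) ^ 2) with hB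
  have hBle : ∀ x, -B ≤ coerciveFun d a x := fun x => by
    have h1 := coerciveFun_ge hd a x
    have h2 : 0 ≤ ∑ l, (x l ^ 2 / 2) := Finset.sum_nonneg fun l _ => by positivity
    linarith
  -- near-vanishing of `n + 1` polynomials at once is impossible on the sublevel set
  have hsmall : ∀ᶠ N in Filter.atTop, ∀ T : Finset (Fin m), T.card = n + 1 →
      ∀ x, coerciveFun d a x ≤ M → τ N * (M + B) < ∑ i ∈ T, (eval x (p i) - c i) ^ 2 := by
    rw [Filter.eventually_all]
    intro T
    by_cases hT : T.card = n + 1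
    swap
    · exact Filter.Eventually.of_forall fun _ h => absurd h hT
    have hcont : Continuous fun x : Fin n → ℝ => ∑ i ∈ T, (eval x (p i) - c i) ^ 2 :=
      continuous_finsetSum _ fun i _ =>
        ((MvPolynomial.continuous_eval _).sub continuous_const).pow 2
    obtain ⟨η, hη0, hη⟩ : ∃ η > 0, ∀ x, coerciveFun d a x ≤ M →
        η ≤ ∑ i ∈ T, (eval x (p i) - c i) ^ 2 := by
      refine (isCompact_sublevel hd a M).exists_forall_le' hcont.continuousOn fun x _ => ?_
      obtain ⟨i, hi, hne⟩ := hgen' T hT x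
      exact Finset.sum_pos' (fun _ _ => sq_nonneg _)
        ⟨i, hi, by have := sub_ne_zero.mpr hne; positivity⟩
    have hlim : Filter.Tendsto (fun N => τ N * (M + B)) Filter.atTop (nhds (0 * (M + B))) :=
      tendsto_one_div_add_atTop_nhds_zero_nat.mul_const _
    rw [zero_mul] at hlim
    filter_upwards [hlim.eventually (gt_mem_nhds hη0)] with N hN _ x hx
    exact hN.trans_le (hη x hx)
  have hcount : ∀ᶠ N in Filter.atTop, ∀ (S : Finset (Fin m)) (Z : Finset (Fin n → ℝ)),
      (∀ z ∈ Z, ∀ l, 2 * d * τ N * (z l ^ (2 * d - 1) + a l) + eval z (penaltyGrad p S c l) = 0) →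
        Z.card ≤ (2 * d - 1) ^ n := by
    rw [Filter.eventually_all]
    intro S
    have hfin := finite_bad_parameters (by omega : 0 < 2 * d - 1) a (penaltyGrad p S c)
      (totalDegree_penaltyGrad_le hd p hdeg S c)
    have hinj : Function.Injective fun N => 2 * d * τ N := by
      intro N N' h
      have h1 : τ N = τ N' := mul_left_cancel₀ (by positivity) h
      simpa [τ] using h1
    have := hinj.tendsto_cofinite.eventually hfin.eventually_cofinite_notMem
    rw [Nat.cofinite_eq_atTop] at this
    filter_upwards [this] with N hN
    simpa only [Set.mem_ofPred_eq, not_not] using hN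
  obtain ⟨N, hN1, hN2⟩ := (hsmall.and hcount).exists
  have hcrit := fun b (hb : b ∈ P) =>
    exists_critical_point hd p a c (hτ N) (s b) (hs b) (y b) (hyc b hb)
  choose! x S hS hx1 hx2 hx3 using hcrit
  have hScard : ∀ b ∈ P, (S b).card ≤ n := by
    intro b hb
    by_contra hlt
    push Not at hlt
    obtain ⟨T, hTS, hT⟩ := Finset.exists_subset_card_eq (Nat.succ_le_of_lt hlt)
    have h1 := hN1 T hT (x b) ((hx1 b hb).trans (hM b))
    have h2 := hx2 b hb
    have h3 : ∑ i ∈ T, (eval (x b) (p i) - c i) ^ 2 ≤ ∑ i ∈ S b, (eval (x b) (p i) - c i) ^ 2 :=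
      Finset.sum_le_sum_of_subset_of_nonneg hTS fun _ _ _ => sq_nonneg _
    have h4 : τ N * (coerciveFun d a (y b) - coerciveFun d a (x b)) ≤ τ N * (M + B) :=
      mul_le_mul_of_nonneg_left (by linarith [hM b, hBle (x b)]) (hτ N).le
    linarith
  -- the sign vector is recovered from `(S b, x b)`
  have hinj : ∀ b ∈ P, ∀ b' ∈ P, S b = S b' → x b = x b' → b = b' := by
    intro b hb b' hb' hSS hxx
    refine hs_inj b b' fun i => ?_
    have hne := sub_ne_zero.mpr (hgen N (S b) (x b) (hx3 b hb) i)
    have h1 := hS b hb i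
    have h2 := hS b' hb' i
    rw [← hSS, ← hxx, h1] at h2
    have e1 := hs b i
    have e2 := hs b' i
    rcases lt_or_gt_of_ne hne with h | h
    · have k : ∀ u : ℝ, u * (eval (x b) (p i) - c i) ≤ 0 ↔ 0 ≤ u := fun u =>
        ⟨fun hu => by by_contra hc; push Not at hc; nlinarith, fun hu => by nlinarith⟩
      rw [k, k] at h2
      have z1 : s b i ≠ 0 := fun h0 => by simp [h0] at e1
      have z2 : s b' i ≠ 0 := fun h0 => by simp [h0] at e2
      rw [lt_iff_le_and_ne, lt_iff_le_and_ne, h2]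
      simp [z1.symm, z2.symm]
    · have k : ∀ u : ℝ, u * (eval (x b) (p i) - c i) ≤ 0 ↔ u ≤ 0 := fun u =>
        ⟨fun hu => by by_contra hc; push Not at hc; nlinarith, fun hu => by nlinarith⟩
      rw [k, k] at h2
      rw [← not_le, ← not_le, h2]
  rw [mul_comm]
  refine Finset.card_le_mul_card_image_of_maps_to (f := S) (fun b hb => ?_) _ fun S₀ _ => ?_
  · simpa using hScard b hb
  · have hc : ((P.filter fun b => S b = S₀).image x).card = (P.filter fun b => S b = S₀).card := by
      refine Finset.card_image_of_injOn fun b hb b' hb' h => ?_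
      have hb := Finset.mem_filter.mp hb
      have hb' := Finset.mem_filter.mp hb'
      exact hinj b hb.1 b' hb'.1 (hb.2.trans hb'.2.symm) h
    rw [← hc]
    refine hN2 S₀ _ fun z hz => ?_
    obtain ⟨b, hb, rfl⟩ := Finset.mem_image.mp hz
    have hb := Finset.mem_filter.mp hb
    exact hb.2 ▸ hx3 b hb.1

/-- Lemma 5.10 of the paper (Theorem 8.3 of Anthony–Bartlett): if `p₁,…,p_m` are real
polynomials in `n ≤ m` variables of total degree at most `d ≥ 1`, then the number of
sign patterns `(s(p₁(x)),…,s(p_m(x)))`, where `s(t) = 1` if `t ≥ 0` and `s(t) = 0`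
otherwise, realized as `x` ranges over `ℝ^n`, is at most `2 (2emd/n)^n`.
Patterns are encoded as boolean vectors `b : Fin m → Bool` with `b i = true ↔ p i x ≥ 0`. -/
theorem stmt_5 (n m d : ℕ) (hn : 0 < n) (hm : 0 < m) (hd : 1 ≤ d) (hnm : n ≤ m)
    (p : Fin m → MvPolynomial (Fin n) ℝ)
    (hdeg : ∀ i, (p i).totalDegree ≤ d) :
    (Set.ncard {b : Fin m → Bool | ∃ x : Fin n → ℝ,
        ∀ i, (b i = true ↔ 0 ≤ MvPolynomial.eval x (p i))} : ℝ)
      ≤ 2 * (2 * Real.exp 1 * m * d / n) ^ n := by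
  classical
  rw [Set.ncard_eq_toFinset_card']
  have h1 := card_patterns_le hd p hdeg
    (Set.toFinset {b : Fin m → Bool | ∃ x : Fin n → ℝ,
        ∀ i, (b i = true ↔ 0 ≤ MvPolynomial.eval x (p i))}) (fun b hb => by simpa using hb)
  have h2 := card_small_subsets_le hn hnm
  have h3 : (((2 * d - 1 : ℕ) ^ n : ℕ) : ℝ) ≤ (2 * d : ℝ) ^ n := by
    exact_mod_cast Nat.pow_le_pow_left (Nat.sub_le _ _) n
  calc _ ≤ (((Finset.univ.filter fun S : Finset (Fin m) => S.card ≤ n).card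
        * (2 * d - 1) ^ n : ℕ) : ℝ) := by exact_mod_cast h1
    _ ≤ (Real.exp 1 * m / n) ^ n * (2 * d : ℝ) ^ n := by
        rw [Nat.cast_mul]
        exact mul_le_mul h2 h3 (by positivity) (by positivity)
    _ = (2 * Real.exp 1 * m * d / n) ^ n := by
        rw [← mul_pow]; congr 1; ring
    _ ≤ 2 * (2 * Real.exp 1 * m * d / n) ^ n := by
        have : 0 ≤ (2 * Real.exp 1 * m * d / n) ^ n := by positivity
        linarith
end

section
/- Let d, D, W ∈ ℕ⁺ and let u : ℝ^d → ℝ be implemented by a neural network of depth D and width W whose activation functions all belong to {ReLU³} (respectively, all belong to {ReLU², ReLU³}). Then u is continuously differentiable, and for each i ∈ {1,…,d} the partial derivative ∂u/∂x_i : ℝ^d → ℝ is implemented by a neural network of depth D + 2 and width (D + 2)·W whose activation functions belong to {ReLU², ReLU³} (respectively, to {ReLU, ReLU², ReLU³}). -/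
/-!
The partial derivative is computed by forward-mode differentiation inside a network.
Writing `f_ℓ = ρ(g_ℓ)` for the hidden layers, `g_ℓ = A f_{ℓ-1} + b`, the chain rule gives
`∂f_ℓ = ρ'(g_ℓ) ⊙ A ∂f_{ℓ-1}`, and `ρ'` is a multiple of a one-lower power `σ` of ReLU. So layer `ℓ`
of the new network stores `f_ℓ`, `h_ℓ = σ(g_ℓ)`, and the ReLU² units from which the products
`∂f_{ℓ-1} = c h_{ℓ-1} ⊙ A ∂f_{ℓ-2}` are read off linearly by
`4ab = (a+b)² - (a-b)²`, `t² = ReLU²(t) + ReLU²(-t)`, i.e. four units per product.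

This costs at most `6W` units per layer. Since the last hidden state is never needed (the output is
affine), only `5W` are needed for `D = 3` and `4W` for `D = 2`, so `(D+2)W` suffices for `D ≥ 2`;
for `D = 1` the derivative is constant. One more hidden layer is needed for the last product,
and the remaining one realizes the identity on the input.

Networks are handled through `NetF`, a recursive description that peels off the first layer and allows
arbitrary finite index types. The main induction is `NetF.tangent`.
-/

/-- `ReLUpow k` is the function `x ↦ (max x 0)^k`; `ReLUpow 1 = ReLU`,
`ReLUpow 2 = ReLU²`, `ReLUpow 3 = ReLU³`. -/
noncomputable def ReLUpow (k : ℕ) : ℝ → ℝ := fun x => max x 0 ^ k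

/-- Evaluation of the layers of a fully connected network with layer widths `n ℓ`,
weight matrices `A ℓ`, biases `b ℓ` and unit-wise activation functions `ρ ℓ i`
(producing layer `ℓ+1` from layer `ℓ`). -/
def evalNN (n : ℕ → ℕ)
    (A : ∀ ℓ : ℕ, Matrix (Fin (n (ℓ + 1))) (Fin (n ℓ)) ℝ)
    (b : ∀ ℓ : ℕ, Fin (n (ℓ + 1)) → ℝ)
    (ρ : ∀ ℓ : ℕ, Fin (n (ℓ + 1)) → ℝ → ℝ)
    (x : Fin (n 0) → ℝ) : (ℓ : ℕ) → Fin (n ℓ) → ℝ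
  | 0 => x
  | (ℓ + 1) => fun i => ρ ℓ i ((A ℓ).mulVec (evalNN n A b ρ x ℓ) i + b ℓ i)

/-- `ImplementedBy d f D W Φ`: the function `f : ℝ^d → ℝ` is implemented by a neural
network of depth `D` and width `W` whose (hidden-layer, unit-wise) activation functions
all belong to `Φ`; the output layer is affine (activation `id`). -/
def ImplementedBy (d : ℕ) (f : (Fin d → ℝ) → ℝ) (D W : ℕ) (Φ : Set (ℝ → ℝ)) : Prop :=
  ∃ (n : ℕ → ℕ) (h0 : n 0 = d) (hD : n D = 1),
    (∀ ℓ ≤ D, n ℓ ≤ W) ∧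
    ∃ (A : ∀ ℓ : ℕ, Matrix (Fin (n (ℓ + 1))) (Fin (n ℓ)) ℝ)
      (b : ∀ ℓ : ℕ, Fin (n (ℓ + 1)) → ℝ)
      (ρ : ∀ ℓ : ℕ, Fin (n (ℓ + 1)) → ℝ → ℝ),
      (∀ ℓ, ℓ + 1 < D → ∀ i, ρ ℓ i ∈ Φ) ∧
      (∀ ℓ, ℓ + 1 = D → ∀ i, ρ ℓ i = id) ∧
      (∀ x : Fin d → ℝ,
        f x = evalNN n A b ρ (fun j => x (Fin.cast h0 j)) D (Fin.cast hD.symm 0))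

/-- The `i`-th partial derivative `∂f/∂x_i` of `f : ℝ^d → ℝ`. -/
noncomputable def partialDeriv {d : ℕ} (i : Fin d) (f : (Fin d → ℝ) → ℝ) :
    (Fin d → ℝ) → ℝ :=
  fun x => fderiv ℝ f x (Pi.single i 1)

/-! ### Affine functionals and front-recursive networks -/

/-- Affine real-valued functions on `ι → ℝ`. -/
def IsAff {ι : Type} [Fintype ι] (f : (ι → ℝ) → ℝ) : Prop :=
  ∃ (a : ι → ℝ) (c : ℝ), ∀ x, f x = ∑ j, a j * x j + c

namespace IsAff

variable {ι κ : Type} [Fintype ι] [Fintype κ]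

lemma const (c : ℝ) : IsAff (fun _ : ι → ℝ => c) := ⟨0, c, by simp⟩

lemma coord (i : ι) : IsAff (fun x : ι → ℝ => x i) := by
  classical
  exact ⟨Pi.single i 1, 0, fun x => by simp [Pi.single_apply]⟩

lemma add {f g : (ι → ℝ) → ℝ} (hf : IsAff f) (hg : IsAff g) : IsAff (fun x => f x + g x) := by
  obtain ⟨a, c, h⟩ := hf
  obtain ⟨a', c', h'⟩ := hg
  refine ⟨fun j => a j + a' j, c + c', fun x => ?_⟩
  simp only [h, h', add_mul, Finset.sum_add_distrib]
  ring

lemma smul {f : (ι → ℝ) → ℝ} (r : ℝ) (hf : IsAff f) : IsAff (fun x => r * f x) := by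
  obtain ⟨a, c, h⟩ := hf
  refine ⟨fun j => r * a j, r * c, fun x => ?_⟩
  simp only [h, mul_add, Finset.mul_sum, mul_assoc]

lemma sum {f : κ → (ι → ℝ) → ℝ} (hf : ∀ k, IsAff (f k)) : IsAff (fun x => ∑ k, f k x) := by
  choose a c h using hf
  refine ⟨fun j => ∑ k, a k j, ∑ k, c k, fun x => ?_⟩
  simp only [h, Finset.sum_add_distrib, Finset.sum_mul]
  rw [Finset.sum_comm]

lemma comp {f : (κ → ℝ) → ℝ} (hf : IsAff f) {p : κ → (ι → ℝ) → ℝ} (hp : ∀ k, IsAff (p k)) :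
    IsAff (fun x => f (fun k => p k x)) := by
  obtain ⟨a, c, h⟩ := hf
  simp only [h]
  exact (sum fun k => (hp k).smul (a k)).add (const c)

lemma contDiff {f : (ι → ℝ) → ℝ} (hf : IsAff f) : ContDiff ℝ 1 f := by
  obtain ⟨a, c, h⟩ := hf
  rw [show f = fun x => ∑ j, a j * x j + c from funext h]
  fun_prop

end IsAff

/-- `NetF Φ w k ι f`: `f : (ι → ℝ) → ℝ` is computed by a network with `k` hidden layers, each with at
most `w` units, and activations in `Φ`. The input width is not constrained, and layers
are indexed by arbitrary finite types. -/
def NetF (Φ : Set (ℝ → ℝ)) (w : ℕ) : ℕ → (ι : Type) → [Fintype ι] → ((ι → ℝ) → ℝ) → Prop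
  | 0, _, _, f => IsAff f
  | k + 1, ι, _, f => ∃ (κ : Type) (_ : Fintype κ), Fintype.card κ ≤ w ∧
      ∃ (p : κ → (ι → ℝ) → ℝ) (ρ : κ → ℝ → ℝ) (g : (κ → ℝ) → ℝ),
        (∀ i, IsAff (p i)) ∧ (∀ i, ρ i ∈ Φ) ∧ NetF Φ w k κ g ∧
        f = fun x => g (fun i => ρ i (p i x))

namespace NetF

variable {Φ Φ' : Set (ℝ → ℝ)} {w W : ℕ}

lemma comp_aff {k : ℕ} {ι κ : Type} [Fintype ι] [Fintype κ] {f : (κ → ℝ) → ℝ}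
    (hf : NetF Φ w k κ f) {p : κ → (ι → ℝ) → ℝ} (hp : ∀ i, IsAff (p i)) :
    NetF Φ w k ι (fun x => f (fun i => p i x)) := by
  cases k with
  | zero => exact IsAff.comp hf hp
  | succ k =>
    obtain ⟨μ, hμ, hc, q, ρ, g, hq, hρ, hg, rfl⟩ := hf
    exact ⟨μ, hμ, hc, fun i x => q i (fun j => p j x), ρ, g, fun i => (hq i).comp hp, hρ, hg, rfl⟩

lemma const (k : ℕ) {ι : Type} [Fintype ι] (c : ℝ) : NetF Φ w k ι (fun _ => c) := by
  induction k generalizing ι with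
  | zero => exact IsAff.const c
  | succ k ih =>
    exact ⟨Empty, inferInstance, by simp, fun i => i.elim, fun i => i.elim, fun _ => c,
      fun i => i.elim, fun i => i.elim, ih, rfl⟩

lemma sq_eq (t : ℝ) : ReLUpow 2 t + ReLUpow 2 (-t) = t ^ 2 := by
  unfold ReLUpow
  rcases le_total t 0 with h | h
  · rw [max_eq_right h, max_eq_left (by linarith)]; ring
  · rw [max_eq_left h, max_eq_right (by linarith)]; ring

/-- Prepend a hidden layer that computes the units `ρ i (p i x)`, together with the products
`H j x * V j x`, each of which costs four ReLU² units. -/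
lemma prod_layer (h2 : ReLUpow 2 ∈ Φ) {k : ℕ} {ι μ κ : Type} [Fintype ι] [Fintype μ] [Fintype κ]
    (hw : Fintype.card μ + 4 * Fintype.card κ ≤ w)
    {p : μ → (ι → ℝ) → ℝ} {ρ : μ → ℝ → ℝ} {H V : κ → (ι → ℝ) → ℝ}
    (hp : ∀ i, IsAff (p i)) (hρ : ∀ i, ρ i ∈ Φ) (hH : ∀ j, IsAff (H j)) (hV : ∀ j, IsAff (V j))
    {r : (μ ⊕ κ → ℝ) → ℝ} (hr : NetF Φ w k (μ ⊕ κ) r) :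
    NetF Φ w (k + 1) ι
      (fun x => r (Sum.elim (fun i => ρ i (p i x)) (fun j => H j x * V j x))) := by
  -- the four units of a product have preactivations `H+V`, `-(H+V)`, `H-V`, `-(H-V)`
  let s : Fin 4 → ℝ := ![1, -1, 1, -1]
  let t : Fin 4 → ℝ := ![1, -1, -1, 1]
  refine ⟨μ ⊕ κ × Fin 4, inferInstance, ?_,
    Sum.elim p (fun q x => s q.2 * H q.1 x + t q.2 * V q.1 x),
    Sum.elim ρ (fun _ => ReLUpow 2),
    fun y => r (fun i => (Sum.elim (fun i (y : μ ⊕ κ × Fin 4 → ℝ) => y (Sum.inl i))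
      (fun j y => ∑ e, s e * t e * (1 / 4) * y (Sum.inr (j, e))) i : (_ → ℝ) → ℝ) y),
    ?_, ?_, ?_, ?_⟩
  · simp only [Fintype.card_sum, Fintype.card_prod, Fintype.card_fin]; omega
  · rintro (i | q)
    · exact hp i
    · exact ((hH q.1).smul _).add ((hV q.1).smul _)
  · rintro (i | q)
    · exact hρ i
    · exact h2
  · apply hr.comp_aff
    rintro (i | j)
    · exact IsAff.coord _
    · exact IsAff.sum fun e => (IsAff.coord _).smul _
  · funext x
    congr 1
    funext i
    rcases i with i | j
    · rfl
    · have h₁ := sq_eq (H j x + V j x)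
      have h₂ := sq_eq (H j x - V j x)
      simp only [Sum.elim_inr, Fin.sum_univ_four, s, t, Matrix.cons_val_zero, Matrix.cons_val_one,
        Matrix.cons_val]
      rw [show 1 * H j x + 1 * V j x = H j x + V j x by ring,
        show -1 * H j x + -1 * V j x = -(H j x + V j x) by ring,
        show 1 * H j x + -1 * V j x = H j x - V j x by ring,
        show -1 * H j x + 1 * V j x = -(H j x - V j x) by ring]
      linarith

/-- Prepend a hidden layer that realizes the identity of the input space (as the product with `1`). -/
lemma pad (h2 : ReLUpow 2 ∈ Φ) {k : ℕ} {ι : Type} [Fintype ι] (hw : 4 * Fintype.card ι ≤ w)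
    {f : (ι → ℝ) → ℝ} (hf : NetF Φ w k ι f) : NetF Φ w (k + 1) ι f := by
  have := prod_layer (μ := Empty) (κ := ι) h2 (by simpa using hw) (p := fun i => i.elim)
    (ρ := fun i => i.elim) (H := fun j x => x j) (V := fun _ _ => 1) (fun i => i.elim)
    (fun i => i.elim) IsAff.coord (fun _ => IsAff.const 1)
    (hf.comp_aff (p := fun i (y : Empty ⊕ ι → ℝ) => y (Sum.inr i)) fun _ => IsAff.coord _)
  simpa using this

/-! ### Differentiation -/

/-- The property of the pair `(Φ, Φ')` that drives the argument: each activation in `Φ` is `C¹`, and its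
derivative is a multiple of an activation in `Φ'`. -/
def DerivIn (Φ Φ' : Set (ℝ → ℝ)) : Prop :=
  ∀ ρ ∈ Φ, ContDiff ℝ 1 ρ ∧ ∃ c : ℝ, ∃ σ ∈ Φ', ∀ t, HasDerivAt ρ (c * σ t) t

lemma contDiff (hΦ : DerivIn Φ Φ') {k : ℕ} {ι : Type} [Fintype ι] {f : (ι → ℝ) → ℝ}
    (hf : NetF Φ W k ι f) : ContDiff ℝ 1 f := by
  induction k generalizing ι with
  | zero => exact IsAff.contDiff hf
  | succ k ih =>
    obtain ⟨κ, _, -, p, ρ, g, hp, hρ, hg, rfl⟩ := hf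
    exact (ih hg).comp (contDiff_pi.2 fun i => (hΦ _ (hρ i)).1.comp (hp i).contDiff)

/-- The chain rule for one layer. -/
lemma fderiv_layer {ι κ : Type} [Fintype ι] [Fintype κ] {g : (κ → ℝ) → ℝ} (hg : ContDiff ℝ 1 g)
    {ρ σ : κ → ℝ → ℝ} {c : κ → ℝ} (hρ : ∀ i t, HasDerivAt (ρ i) (c i * σ i t) t)
    {p : κ → (ι → ℝ) → ℝ} {a : κ → ι → ℝ} {b : κ → ℝ}
    (hp : ∀ i x, p i x = ∑ j, a i j * x j + b i) (x v : ι → ℝ) :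
    fderiv ℝ (fun x => g (fun i => ρ i (p i x))) x v =
      fderiv ℝ g (fun i => ρ i (p i x)) (fun i => c i * σ i (p i x) * ∑ j, a i j * v j) := by
  have hlin : ∀ i, HasFDerivAt (p i)
      (∑ j, a i j • ContinuousLinearMap.proj (R := ℝ) (φ := fun _ : ι => ℝ) j) x := by
    intro i
    rw [show p i = fun x => ∑ j, a i j * x j + b i from funext (hp i)]
    refine HasFDerivAt.add_const _ (HasFDerivAt.fun_sum fun j _ => ?_)
    exact (hasFDerivAt_apply j x).const_mul (a i j)
  have hL : HasFDerivAt (fun x i => ρ i (p i x)) (ContinuousLinearMap.pi fun i =>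
      (c i * σ i (p i x)) • ∑ j, a i j • ContinuousLinearMap.proj (R := ℝ) (φ := fun _ : ι => ℝ) j)
      x := hasFDerivAt_pi.2 fun i => (hρ i (p i x)).comp_hasFDerivAt x (hlin i)
  have hG := (hg.differentiable one_ne_zero (fun i => ρ i (p i x))).hasFDerivAt
  have := (HasFDerivAt.comp x hG hL).fderiv
  rw [Function.comp_def] at this
  rw [this]
  simp only [ContinuousLinearMap.comp_apply]
  congr 1
  funext i
  simp

lemma fderiv_aff {ι : Type} [Fintype ι] {f : (ι → ℝ) → ℝ} {a : ι → ℝ} {c : ℝ}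
    (h : ∀ x, f x = ∑ j, a j * x j + c) (x v : ι → ℝ) : fderiv ℝ f x v = ∑ j, a j * v j := by
  have hlin : HasFDerivAt f
      (∑ j, a j • ContinuousLinearMap.proj (R := ℝ) (φ := fun _ : ι => ℝ) j) x := by
    rw [show f = fun x => ∑ j, a j * x j + c from funext h]
    refine HasFDerivAt.add_const _ (HasFDerivAt.fun_sum fun j _ => ?_)
    exact (hasFDerivAt_apply j x).const_mul (a j)
  rw [hlin.fderiv]
  simp

/-- An affine function needs a single product layer to evaluate its differential at `H ⊙ V`, and the base
point is irrelevant. -/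
lemma tangent_aff (h2 : ReLUpow 2 ∈ Φ') {ι κ : Type} [Fintype ι] [Fintype κ] {g : (κ → ℝ) → ℝ}
    (hg : IsAff g) (hw : 4 * Fintype.card κ ≤ w) (F : κ → (ι → ℝ) → ℝ) {H V : κ → (ι → ℝ) → ℝ}
    (hH : ∀ j, IsAff (H j)) (hV : ∀ j, IsAff (V j)) :
    NetF Φ' w 1 ι (fun x => fderiv ℝ g (fun j => F j x) (fun j => H j x * V j x)) := by
  obtain ⟨a, c, h⟩ := hg
  simp only [fderiv_aff h]
  exact prod_layer (k := 0) (μ := Empty) (κ := κ) h2 (by simpa using hw) (p := fun i => i.elim)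
    (ρ := fun i => i.elim) (fun i => i.elim) (fun i => i.elim) hH hV
    (r := fun y => ∑ j, a j * y (Sum.inr j)) (IsAff.sum fun j => (IsAff.coord _).smul _)

/-- If `g` has `k` hidden layers, `Dg(F)[H ⊙ V]`, as a function of a variable on which `F`, `H`, `V`
depend affinely, is a network with `k + 1` hidden layers. The widest layer stores two copies of a
hidden layer of `g` (values, derivatives of activations) and four units per product;
one copy is dropped if `k = 1`, and both if `k = 0`. -/
lemma tangent (hΦ : DerivIn Φ Φ') (hsub : Φ ⊆ Φ') (h2 : ReLUpow 2 ∈ Φ') {k : ℕ} {ι κ : Type}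
    [Fintype ι] [Fintype κ] {g : (κ → ℝ) → ℝ} (hg : NetF Φ W k κ g)
    (hκ : Fintype.card κ ≤ W) (hw : (min k 2 + 4) * W ≤ w) {F H V : κ → (ι → ℝ) → ℝ}
    (hF : ∀ j, IsAff (F j)) (hH : ∀ j, IsAff (H j)) (hV : ∀ j, IsAff (V j)) :
    NetF Φ' w (k + 1) ι
      (fun x => fderiv ℝ g (fun j => F j x) (fun j => H j x * V j x)) := by
  induction k generalizing ι κ with
  | zero => exact tangent_aff h2 hg (by simp at hw; omega) F hH hV
  | succ k ih =>
    obtain ⟨κ', _, hκ', p, ρ, g', hp, hρ, hg', rfl⟩ := hg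
    choose c σ hσ hder using fun i => (hΦ _ (hρ i)).2
    choose a b hab using hp
    have hg'C := hg'.contDiff hΦ
    simp only [fderiv_layer hg'C hder hab]
    have hp : ∀ i, IsAff (p i) := fun i => ⟨a i, b i, hab i⟩
    have hpF : ∀ i, IsAff (fun x => p i (fun j => F j x)) := fun i => (hp i).comp hF
    cases k with
    | zero =>
      have hw' : 5 * W ≤ w := by simpa using hw
      -- the differential of the affine `g'` does not depend on the base point
      have key := tangent_aff (ι := κ' ⊕ κ) h2 hg' (w := w) (by omega) (fun _ _ => 0)
        (H := fun i y => c i * y (Sum.inl i)) (V := fun i y => ∑ j, a i j * y (Sum.inr j))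
        (fun i => (IsAff.coord _).smul _) (fun i => IsAff.sum fun j => (IsAff.coord _).smul _)
      have := prod_layer h2 (by omega) hpF hσ hH hV key
      obtain ⟨a', c', h'⟩ := hg'
      simpa only [fderiv_aff h', Sum.elim_inl, Sum.elim_inr] using this
    | succ k =>
      have hmin : min (k + 1 + 1) 2 = 2 := by omega
      have hw' : 6 * W ≤ w := by simpa [hmin] using hw
      have key := ih (ι := (κ' ⊕ κ') ⊕ κ) hg' hκ'
        (le_trans (Nat.mul_le_mul_right _ (by omega)) hw')
        (F := fun i y => y (Sum.inl (Sum.inl i)))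
        (H := fun i y => c i * y (Sum.inl (Sum.inr i))) (V := fun i y => ∑ j, a i j * y (Sum.inr j))
        (fun i => IsAff.coord _)
        (fun i => (IsAff.coord _).smul _) (fun i => IsAff.sum fun j => (IsAff.coord _).smul _)
      exact prod_layer (μ := κ' ⊕ κ') h2 (by rw [Fintype.card_sum]; omega)
        (p := Sum.elim (fun i x => p i (fun j => F j x)) (fun i x => p i (fun j => F j x)))
        (ρ := Sum.elim ρ σ) (by rintro (i | i) <;> exact hpF i)
        (by rintro (i | i); exacts [hsub (hρ i), hσ i]) hH hV key

/-- Directional derivatives of a network with `k` hidden layers. -/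
lemma directional (hΦ : DerivIn Φ Φ') (hsub : Φ ⊆ Φ') (h2 : ReLUpow 2 ∈ Φ') {k : ℕ} {ι : Type}
    [Fintype ι] {f : (ι → ℝ) → ℝ} (hf : NetF Φ W k ι f) (hι : Fintype.card ι ≤ W) (v : ι → ℝ) :
    NetF Φ' ((k + 3) * W) (k + 2) ι (fun x => fderiv ℝ f x v) := by
  cases k with
  | zero =>
    obtain ⟨a, c, h⟩ := hf
    simp only [fderiv_aff h]
    exact const _ _
  | succ k =>
    have h4 : 4 * W ≤ (k + 1 + 3) * W := Nat.mul_le_mul_right _ (by omega)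
    refine pad h2 (by omega) ?_
    obtain ⟨κ, _, hκ, p, ρ, g, hp, hρ, hg, rfl⟩ := hf
    choose c σ hσ hder using fun i => (hΦ _ (hρ i)).2
    choose a b hab using hp
    simp only [fderiv_layer (hg.contDiff hΦ) hder hab]
    have hp : ∀ i, IsAff (p i) := fun i => ⟨a i, b i, hab i⟩
    refine ⟨κ ⊕ κ, inferInstance, by rw [Fintype.card_sum]; omega, Sum.elim p p, Sum.elim ρ σ,
      fun y => fderiv ℝ g (fun i => y (Sum.inl i))
        (fun i => c i * y (Sum.inr i) * ∑ j, a i j * v j),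
      by rintro (i | i) <;> exact hp i, by rintro (i | i); exacts [hsub (hρ i), hσ i], ?_, rfl⟩
    exact tangent hΦ hsub h2 hg hκ (Nat.mul_le_mul_right _ (by omega)) (fun i => IsAff.coord _)
      (fun i => (IsAff.coord _).smul _) (fun i => IsAff.const _)

end NetF

/-! ### Translation between `ImplementedBy` and `NetF` -/

/-- Peeling off the first layer. -/
lemma evalNN_shift (n : ℕ → ℕ) (A : ∀ ℓ : ℕ, Matrix (Fin (n (ℓ + 1))) (Fin (n ℓ)) ℝ)
    (b : ∀ ℓ : ℕ, Fin (n (ℓ + 1)) → ℝ) (ρ : ∀ ℓ : ℕ, Fin (n (ℓ + 1)) → ℝ → ℝ)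
    (x : Fin (n 0) → ℝ) (ℓ : ℕ) :
    evalNN n A b ρ x (ℓ + 1) = evalNN (fun ℓ => n (ℓ + 1)) (fun ℓ => A (ℓ + 1))
      (fun ℓ => b (ℓ + 1)) (fun ℓ => ρ (ℓ + 1))
      (fun i => ρ 0 i ((A 0).mulVec x i + b 0 i)) ℓ := by
  induction ℓ with
  | zero => rfl
  | succ ℓ ih =>
    rw [evalNN, ih]
    rfl

lemma isAff_mulVec {m n : ℕ} (A : Matrix (Fin m) (Fin n) ℝ) (b : Fin m → ℝ) (i : Fin m) :
    IsAff (fun x => A.mulVec x i + b i) :=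
  ⟨A i, b i, fun _ => rfl⟩

lemma netF_evalNN {Φ : Set (ℝ → ℝ)} {W : ℕ} (k : ℕ) (n : ℕ → ℕ)
    (A : ∀ ℓ : ℕ, Matrix (Fin (n (ℓ + 1))) (Fin (n ℓ)) ℝ)
    (b : ∀ ℓ : ℕ, Fin (n (ℓ + 1)) → ℝ) (ρ : ∀ ℓ : ℕ, Fin (n (ℓ + 1)) → ℝ → ℝ)
    (hn : ∀ ℓ ≤ k + 1, n ℓ ≤ W) (hρ : ∀ ℓ, ℓ + 1 < k + 1 → ∀ i, ρ ℓ i ∈ Φ)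
    (hid : ∀ ℓ, ℓ + 1 = k + 1 → ∀ i, ρ ℓ i = id) (j : Fin (n (k + 1))) :
    NetF Φ W k (Fin (n 0)) (fun x => evalNN n A b ρ x (k + 1) j) := by
  induction k generalizing n with
  | zero =>
    have : (fun x => evalNN n A b ρ x (0 + 1) j) = fun x => (A 0).mulVec x j + b 0 j := by
      funext x
      simp [evalNN, hid 0 rfl]
    rw [this]
    exact isAff_mulVec _ _ _
  | succ k ih =>
    simp only [evalNN_shift n A b ρ _ (k + 1)]
    refine ⟨Fin (n 1), inferInstance, by simpa using hn 1 (by omega), _, ρ 0,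
      fun y => evalNN (fun ℓ => n (ℓ + 1)) (fun ℓ => A (ℓ + 1)) (fun ℓ => b (ℓ + 1))
        (fun ℓ => ρ (ℓ + 1)) y (k + 1) j,
      isAff_mulVec (A 0) (b 0), hρ 0 (by omega), ?_, rfl⟩
    exact ih (fun ℓ => n (ℓ + 1)) (fun ℓ => A (ℓ + 1)) (fun ℓ => b (ℓ + 1)) (fun ℓ => ρ (ℓ + 1))
      (fun ℓ h => hn _ (by omega)) (fun ℓ h => hρ _ (by omega)) (fun ℓ h => hid _ (by omega)) j

lemma ImplementedBy.netF {Φ : Set (ℝ → ℝ)} {d k W : ℕ} {u : (Fin d → ℝ) → ℝ}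
    (h : ImplementedBy d u (k + 1) W Φ) : d ≤ W ∧ NetF Φ W k (Fin d) u := by
  obtain ⟨n, rfl, hD, hn, A, b, ρ, hρ, hid, hu⟩ := h
  refine ⟨hn 0 (by omega), ?_⟩
  rw [show u = _ from funext hu]
  exact netF_evalNN k n A b ρ hn hρ hid _

lemma implementedBy_aff {Φ : Set (ℝ → ℝ)} {d W : ℕ} (hW : 0 < W) (hd : d ≤ W)
    {f : (Fin d → ℝ) → ℝ} (hf : IsAff f) : ImplementedBy d f 1 W Φ := by
  obtain ⟨a, c, h⟩ := hf
  refine ⟨fun ℓ => Nat.casesOn ℓ d fun _ => 1, rfl, rfl, ?_,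
    fun ℓ => Nat.casesOn ℓ (fun _ j => a j) (fun _ => 0), fun _ _ => c, fun _ _ => id,
    fun ℓ hℓ => by omega, fun _ _ _ => rfl, fun x => ?_⟩
  · rintro (_ | ℓ) _
    · exact hd
    · exact hW
  · rw [h]
    rfl

/-- Prepending a layer. -/
lemma ImplementedBy.cons {Φ : Set (ℝ → ℝ)} {d m k W : ℕ} {g : (Fin m → ℝ) → ℝ}
    (hg : ImplementedBy m g (k + 1) W Φ) (hd : d ≤ W) (A₀ : Matrix (Fin m) (Fin d) ℝ)
    (b₀ : Fin m → ℝ) (ρ₀ : Fin m → ℝ → ℝ) (hρ₀ : ∀ i, ρ₀ i ∈ Φ) :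
    ImplementedBy d (fun x => g (fun i => ρ₀ i (A₀.mulVec x i + b₀ i))) (k + 2) W Φ := by
  obtain ⟨n, rfl, hD, hn, A, b, ρ, hρ, hid, hu⟩ := hg
  refine ⟨fun ℓ => Nat.casesOn ℓ d n, rfl, hD, ?_,
    fun ℓ => Nat.casesOn ℓ A₀ A, fun ℓ => Nat.casesOn ℓ b₀ b, fun ℓ => Nat.casesOn ℓ ρ₀ ρ,
    ?_, ?_, fun x => ?_⟩
  · rintro (_ | ℓ) h
    · exact hd
    · exact hn ℓ (by omega)
  · rintro (_ | ℓ) h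
    · exact hρ₀
    · exact hρ ℓ (by omega)
  · rintro (_ | ℓ) h
    · omega
    · exact hid ℓ (by omega)
  · rw [evalNN_shift]
    exact hu _

lemma NetF.implementedBy {Φ : Set (ℝ → ℝ)} {k d W : ℕ} (hW : 0 < W) (hd : d ≤ W)
    {f : (Fin d → ℝ) → ℝ} (hf : NetF Φ W k (Fin d) f) : ImplementedBy d f (k + 1) W Φ := by
  induction k generalizing d with
  | zero => exact implementedBy_aff hW hd hf
  | succ k ih =>
    obtain ⟨κ, _, hκ, p, ρ, g, hp, hρ, hg, rfl⟩ := hf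
    choose a b hab using hp
    let e := Fintype.equivFin κ
    have hg' := ih hκ (hg.comp_aff (p := fun i (x : Fin (Fintype.card κ) → ℝ) => x (e i))
      fun i => IsAff.coord _)
    have := hg'.cons hd (fun i j => a (e.symm i) j) (fun i => b (e.symm i))
      (fun i => ρ (e.symm i)) (fun i => hρ _)
    convert this using 5 with x i
    · simp
    · rw [hab]
      simp only [Matrix.mulVec, dotProduct, Equiv.symm_apply_apply]

/-! ### Powers of ReLU -/

lemma hasDerivAt_ReLUpow (k : ℕ) (x : ℝ) :
    HasDerivAt (ReLUpow (k + 2)) ((k + 2 : ℝ) * ReLUpow (k + 1) x) x := by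
  have hcont : ∀ m, Continuous (ReLUpow m) := fun m => by unfold ReLUpow; fun_prop
  have hne : ∀ y : ℝ, y ≠ 0 →
      HasDerivAt (ReLUpow (k + 2)) ((k + 2 : ℝ) * ReLUpow (k + 1) y) y := by
    intro y hy
    rcases lt_or_gt_of_ne hy with h | h
    · have h0 : (k + 2 : ℝ) * ReLUpow (k + 1) y = 0 := by simp [ReLUpow, max_eq_right h.le]
      rw [h0]
      refine (hasDerivAt_const y (0 : ℝ)).congr_of_eventuallyEq ?_
      filter_upwards [Iio_mem_nhds h] with z hz
      simp [ReLUpow, max_eq_right (Set.mem_Iio.1 hz).le]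
    · have h0 : (k + 2 : ℝ) * ReLUpow (k + 1) y = ((k + 2 : ℕ) : ℝ) * y ^ (k + 2 - 1) := by
        simp [ReLUpow, max_eq_left h.le]
      rw [h0]
      refine (hasDerivAt_pow (k + 2) y).congr_of_eventuallyEq ?_
      filter_upwards [Ioi_mem_nhds h] with z hz
      simp [ReLUpow, max_eq_left (Set.mem_Ioi.1 hz).le]
  by_cases hx : x = 0
  · subst hx
    exact hasDerivAt_of_hasDerivAt_of_ne hne (hcont _).continuousAt
      ((hcont _).const_mul _).continuousAt
  · exact hne x hx

lemma contDiff_ReLUpow (k : ℕ) : ContDiff ℝ 1 (ReLUpow (k + 2)) := by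
  rw [contDiff_one_iff_deriv]
  refine ⟨fun x => (hasDerivAt_ReLUpow k x).differentiableAt, ?_⟩
  rw [show deriv (ReLUpow (k + 2)) = _ from funext fun x => (hasDerivAt_ReLUpow k x).deriv]
  unfold ReLUpow
  fun_prop

lemma derivIn_ReLUpow {Φ Φ' : Set (ℝ → ℝ)}
    (h : ∀ ρ ∈ Φ, ∃ k, ρ = ReLUpow (k + 2) ∧ ReLUpow (k + 1) ∈ Φ') : NetF.DerivIn Φ Φ' := by
  intro ρ hρ
  obtain ⟨k, rfl, hk⟩ := h ρ hρ
  exact ⟨contDiff_ReLUpow k, _, _, hk, hasDerivAt_ReLUpow k⟩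

/-- Proposition 5.9 of the paper: if `u : ℝ^d → ℝ` is implemented by a `ReLU³`
(resp. `ReLU²–ReLU³`) network of depth `D` and width `W`, then `u` is continuously
differentiable and each partial derivative `∂u/∂x_i` is implemented by a
`ReLU²–ReLU³` (resp. `ReLU–ReLU²–ReLU³`) network of depth `D + 2` and
width `(D + 2)·W`. -/
theorem stmt_7 (d D W : ℕ) (hd : 0 < d) (hD : 0 < D) (hW : 0 < W)
    (u : (Fin d → ℝ) → ℝ) (Φ Φ' : Set (ℝ → ℝ))
    (hΦ : (Φ = {ReLUpow 3} ∧ Φ' = {ReLUpow 2, ReLUpow 3}) ∨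
          (Φ = {ReLUpow 2, ReLUpow 3} ∧ Φ' = {ReLUpow 1, ReLUpow 2, ReLUpow 3}))
    (himpl : ImplementedBy d u D W Φ) :
    ContDiff ℝ 1 u ∧
      ∀ i : Fin d, ImplementedBy d (partialDeriv i u) (D + 2) ((D + 2) * W) Φ' := by
  have hsub : Φ ⊆ Φ' := by
    rcases hΦ with ⟨rfl, rfl⟩ | ⟨rfl, rfl⟩ <;> simp
  have h2 : ReLUpow 2 ∈ Φ' := by
    rcases hΦ with ⟨rfl, rfl⟩ | ⟨rfl, rfl⟩ <;> simp
  have hder : NetF.DerivIn Φ Φ' := by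
    apply derivIn_ReLUpow
    rcases hΦ with ⟨rfl, rfl⟩ | ⟨rfl, rfl⟩
    · rintro ρ rfl
      exact ⟨1, rfl, by simp⟩
    · rintro ρ (rfl | rfl)
      · exact ⟨0, rfl, by simp⟩
      · exact ⟨1, rfl, by simp⟩
  obtain ⟨k, rfl⟩ : ∃ k, D = k + 1 := ⟨D - 1, by omega⟩
  obtain ⟨hdW, hnet⟩ := himpl.netF
  refine ⟨hnet.contDiff hder, fun i => ?_⟩
  exact (hnet.directional hder hsub h2 (by simpa using hdW) (Pi.single i 1)).implementedBy
    (by positivity) (hdW.trans (Nat.le_mul_of_pos_left _ (by omega)))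
end

section
/- Let Ω be a set, B > 0, and let F be a class of functions from Ω to the interval [0, B] containing the zero function, whose pseudo-dimension is finite and equal to P with P ≥ 1. Then for every N ∈ ℕ⁺ with N ≥ P and every choice of points Z₁,…,Z_N ∈ Ω: 2^{−N} ∑_{σ∈{−1,1}^N} sup_{u∈F} (1/N) ∑_{k=1}^N σ_k u(Z_k) ≤ 28 √(3/2) · B · √( (P/N) · log(e N / P) ). -/
/-- A finite set `s` is pseudo-shattered by the class `F`: there are witnesses `y x`
such that every boolean pattern `b` on `s` is realized as the pattern of
`sign (u x - y x)` (i.e. `u x ≥ y x ↔ b x`) for some `u ∈ F`. -/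
def PseudoShatters {X : Type*} (F : Set (X → ℝ)) (s : Finset X) : Prop :=
  ∃ y : X → ℝ, ∀ b : X → Bool, ∃ u ∈ F, ∀ x ∈ s, (y x ≤ u x ↔ b x = true)

/-- The pseudo-dimension of `F`: the supremum (in `ℕ∞`) of the cardinalities of the
finite sets pseudo-shattered by `F`. -/
noncomputable def pdim {X : Type*} (F : Set (X → ℝ)) : ℕ∞ :=
  ⨆ s ∈ {s : Finset X | PseudoShatters F s}, (s.card : ℕ∞)

open Finset

/-- The traces on the sample `Z` of the superlevel sets `{t ≤ u}`, `u ∈ F`, as a family of subsets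
of the index set. -/
noncomputable def levelSets {Ω : Type*} {N : ℕ} (F : Set (Ω → ℝ)) (Z : Fin N → Ω) (t : ℝ) :
    Finset (Finset (Fin N)) := by
  classical
  exact univ.filter fun S => ∃ u ∈ F, ∀ k, k ∈ S ↔ t ≤ u (Z k)

lemma mem_levelSets {Ω : Type*} {N : ℕ} {F : Set (Ω → ℝ)} {Z : Fin N → Ω} {t : ℝ}
    {S : Finset (Fin N)} : S ∈ levelSets F Z t ↔ ∃ u ∈ F, ∀ k, k ∈ S ↔ t ≤ u (Z k) := by
  classical
  simp [levelSets]

/-- A shattered set of indices maps injectively to a pseudo-shattered set of points: indices with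
the same sample point cannot be separated. -/
lemma card_le_of_shatters {Ω : Type*} {N : ℕ} {F : Set (Ω → ℝ)} {Z : Fin N → Ω} {t : ℝ}
    {P : ℕ} (hpdim : pdim F = (P : ℕ∞)) {S : Finset (Fin N)}
    (hS : (levelSets F Z t).Shatters S) : S.card ≤ P := by
  classical
  have hinj : Set.InjOn Z S := by
    intro a ha b hb hab
    by_contra hne
    obtain ⟨T, hT, hST⟩ := hS (singleton_subset_iff.2 ha)
    obtain ⟨u, -, hu⟩ := mem_levelSets.1 hT
    have h1 : a ∈ S ∩ T := by simp [hST]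
    have h2 : b ∉ S ∩ T := by simp [hST, Ne.symm hne]
    apply h2
    rw [mem_inter] at h1 ⊢
    exact ⟨hb, (hu b).2 (hab ▸ (hu a).1 h1.2)⟩
  have hps : PseudoShatters F (S.image Z) := by
    refine ⟨fun _ => t, fun b => ?_⟩
    obtain ⟨T, hT, hST⟩ := hS (filter_subset (fun k => b (Z k) = true) S)
    obtain ⟨u, huF, hu⟩ := mem_levelSets.1 hT
    refine ⟨u, huF, fun x hx => ?_⟩
    obtain ⟨k, hk, rfl⟩ := mem_image.1 hx
    rw [← hu k]
    have := congrArg (fun A => k ∈ A) hST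
    simpa [hk] using this
  have h : ((S.image Z).card : ℕ∞) ≤ pdim F :=
    le_iSup₂ (f := fun (s : Finset Ω) (_ : s ∈ {s : Finset Ω | PseudoShatters F s}) =>
      (s.card : ℕ∞)) (S.image Z) hps
  rw [hpdim, card_image_of_injOn hinj] at h
  exact_mod_cast h

/-- The standard estimate of the Sauer–Shelah sum: weigh the terms of the binomial expansion of
`(1 + P/N)^N ≤ e^P` by powers of `P/N ≤ 1`. -/
lemma sum_choose_le (N P : ℕ) (hP : 1 ≤ P) (hNP : P ≤ N) :
    ((∑ k ∈ Iic P, N.choose k : ℕ) : ℝ) ≤ (Real.exp 1 * N / P) ^ P := by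
  have hP' : (0 : ℝ) < P := by exact_mod_cast hP
  have hN' : (0 : ℝ) < N := by exact_mod_cast (lt_of_lt_of_le hP hNP)
  set x : ℝ := P / N with hx
  have hx0 : 0 < x := by positivity
  have hx1 : x ≤ 1 := by
    rw [hx, div_le_one hN']
    exact_mod_cast hNP
  have key : x ^ P * ((∑ k ∈ Iic P, N.choose k : ℕ) : ℝ) ≤ Real.exp 1 ^ P := by
    calc x ^ P * ((∑ k ∈ Iic P, N.choose k : ℕ) : ℝ)
        = ∑ k ∈ Iic P, x ^ P * (N.choose k : ℝ) := by push_cast; rw [mul_sum]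
      _ ≤ ∑ k ∈ Iic P, x ^ k * (N.choose k : ℝ) := by
          refine sum_le_sum fun k hk => ?_
          gcongr ?_ * _
          exact pow_le_pow_of_le_one hx0.le hx1 (mem_Iic.1 hk)
      _ ≤ ∑ k ∈ range (N + 1), x ^ k * (N.choose k : ℝ) := by
          refine sum_le_sum_of_subset_of_nonneg (fun k hk => ?_) fun _ _ _ => by positivity
          have := mem_Iic.1 hk
          exact mem_range.2 (by omega)
      _ = (x + 1) ^ N := by rw [add_pow]; simp
      _ ≤ Real.exp x ^ N := by
          gcongr
          exact Real.add_one_le_exp x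
      _ = Real.exp 1 ^ P := by
          rw [← Real.exp_nat_mul, ← Real.exp_nat_mul, hx]
          congr 1
          field_simp
  have hW : Real.exp 1 * N / P = Real.exp 1 / x := by rw [hx]; field_simp
  rw [hW, div_pow, le_div_iff₀ (by positivity), mul_comm]
  exact key

lemma card_levelSets_le {Ω : Type*} {N : ℕ} {F : Set (Ω → ℝ)} {Z : Fin N → Ω} (t : ℝ)
    {P : ℕ} (hP : 1 ≤ P) (hNP : P ≤ N) (hpdim : pdim F = (P : ℕ∞)) :
    ((levelSets F Z t).card : ℝ) ≤ (Real.exp 1 * N / P) ^ P := by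
  classical
  refine le_trans ?_ (sum_choose_le N P hP hNP)
  have hvc : (levelSets F Z t).vcDim ≤ P :=
    Finset.sup_le fun S hS => card_le_of_shatters hpdim (mem_shatterer.1 hS)
  have h1 := (card_le_card_shatterer (levelSets F Z t)).trans
    (card_shatterer_le_sum_vcDim (𝒜 := levelSets F Z t))
  rw [Fintype.card_fin] at h1
  exact_mod_cast h1.trans (sum_le_sum_of_subset (Iic_subset_Iic.2 hvc))

/-- Exponential moments of a Rademacher sum with coefficients in `{0, 1}`. -/
lemma sum_exp_le {N : ℕ} (S : Finset (Fin N)) (s : ℝ) :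
    (2 : ℝ)⁻¹ ^ N * ∑ σ : Fin N → Bool,
        Real.exp (s * ∑ k, (if σ k then (1 : ℝ) else -1) * (if k ∈ S then 1 else 0))
      ≤ Real.exp (N * (s ^ 2 / 2)) := by
  classical
  have h : ∑ σ : Fin N → Bool,
        Real.exp (s * ∑ k, (if σ k then (1 : ℝ) else -1) * (if k ∈ S then 1 else 0))
      = ∏ k : Fin N, ∑ b : Bool,
        Real.exp (s * ((if b then (1 : ℝ) else -1) * (if k ∈ S then 1 else 0))) := by
    rw [prod_univ_sum, Fintype.piFinset_univ]
    refine sum_congr rfl fun σ _ => ?_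
    rw [mul_sum, Real.exp_sum]
  have h2 : (2 : ℝ)⁻¹ ^ N = ∏ _k : Fin N, (2 : ℝ)⁻¹ := by simp
  rw [h, h2, ← prod_mul_distrib, Real.exp_nat_mul]
  have h3 : Real.exp (s ^ 2 / 2) ^ N = ∏ _k : Fin N, Real.exp (s ^ 2 / 2) := by simp
  rw [h3]
  refine prod_le_prod (fun k _ => by positivity) fun k _ => ?_
  rw [Fintype.sum_bool]
  by_cases hk : k ∈ S
  · have := Real.cosh_le_exp_half_sq s
    rw [Real.cosh_eq] at this
    simp only [hk, if_true, mul_one]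
    simp only [Bool.false_eq_true, if_false, mul_neg, mul_one]
    linarith
  · simp only [hk, if_false, mul_zero, Real.exp_zero]
    have : 1 ≤ Real.exp (s ^ 2 / 2) := Real.one_le_exp (by positivity)
    linarith

lemma sum_ite_le_eq_floor (m : ℕ) (x : ℝ) (hx0 : 0 ≤ x) (hxm : x ≤ m) :
    ∑ j ∈ range m, (if ((j : ℝ) + 1) ≤ x then (1 : ℝ) else 0) = (⌊x⌋₊ : ℝ) := by
  rw [sum_boole]
  congr 1
  have : (range m).filter (fun j : ℕ => (j : ℝ) + 1 ≤ x) = range ⌊x⌋₊ := by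
    ext j
    have h1 : (j : ℝ) + 1 ≤ x ↔ j + 1 ≤ ⌊x⌋₊ := by
      rw [Nat.le_floor_iff hx0]; push_cast; rfl
    have h2 : ⌊x⌋₊ ≤ m := Nat.floor_le_of_le hxm
    rw [mem_filter, mem_range, mem_range, h1]
    omega
  rw [this, card_range]

/-- Discrete layer-cake formula: a value in `[0, B]` is the Riemann sum of its superlevel
indicators up to the mesh `B/m`. -/
lemma layer_cake (m : ℕ) (hm : 0 < m) (B : ℝ) (hB : 0 < B) (v : ℝ) (hv : v ∈ Set.Icc 0 B) :
    |v - B / m * ∑ j ∈ range m, (if ((j : ℝ) + 1) * (B / m) ≤ v then (1 : ℝ) else 0)|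
      ≤ B / m := by
  have hm' : (0 : ℝ) < m := by exact_mod_cast hm
  have hδ : 0 < B / m := by positivity
  set x : ℝ := v / (B / m) with hx
  have hx0 : 0 ≤ x := div_nonneg hv.1 hδ.le
  have hxm : x ≤ m := by
    rw [hx, div_le_iff₀ hδ, mul_div_cancel₀ _ hm'.ne']
    exact hv.2
  have hvx : v = B / m * x := by rw [hx, mul_div_cancel₀ _ hδ.ne']
  have hs : ∑ j ∈ range m, (if ((j : ℝ) + 1) * (B / m) ≤ v then (1 : ℝ) else 0) = (⌊x⌋₊ : ℝ) := by
    rw [← sum_ite_le_eq_floor m x hx0 hxm]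
    refine sum_congr rfl fun j _ => ?_
    simp only [hx, le_div_iff₀ hδ]
  rw [hs, hvx, ← mul_sub, abs_mul, abs_of_pos hδ]
  have h1 := Nat.floor_le hx0
  have h2 := Nat.lt_floor_add_one x
  have h3 : |x - (⌊x⌋₊ : ℝ)| ≤ 1 := by rw [abs_le]; constructor <;> linarith
  nlinarith

/-- The composite bound (5.3) from the proof of Theorem 5.12 of the paper: for a class
`F` of functions with values in `[0, B]` containing `0`, of finite pseudo-dimension
`P ≥ 1`, and any sample `Z₁,…,Z_N` with `N ≥ P`, the empirical Rademacher complexity of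
`F` is at most `28 √(3/2) · B · √((P/N) log(eN/P))`. -/
theorem stmt_13 {Ω : Type*} (B : ℝ) (hB : 0 < B)
    (F : Set (Ω → ℝ)) (h0 : (fun _ : Ω => (0 : ℝ)) ∈ F)
    (hrange : ∀ u ∈ F, ∀ x : Ω, u x ∈ Set.Icc (0 : ℝ) B)
    (P : ℕ) (hP : 1 ≤ P) (hpdim : pdim F = (P : ℕ∞))
    (N : ℕ) (hN : 0 < N) (hNP : P ≤ N) (Z : Fin N → Ω) :
    empRademacher N F Z
      ≤ 28 * Real.sqrt (3 / 2) * B *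
          Real.sqrt (((P : ℝ) / N) * Real.log (Real.exp 1 * N / P)) := by
  classical
  have hP' : (1 : ℝ) ≤ P := by exact_mod_cast hP
  have hN' : (0 : ℝ) < N := by exact_mod_cast hN
  have hN1 : (1 : ℝ) ≤ N := by exact_mod_cast hN
  have hNP' : (P : ℝ) ≤ N := by exact_mod_cast hNP
  have hcard0 : 0 < Real.exp 1 * N / P := by positivity
  have hlog : 1 ≤ Real.log (Real.exp 1 * N / P) := by
    rw [Real.le_log_iff_exp_le hcard0, le_div_iff₀ (by positivity)]
    exact mul_le_mul_of_nonneg_left hNP' (Real.exp_pos 1).le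
  set l : ℝ := P * Real.log (Real.exp 1 * N / P) with hl
  have hl1 : 1 ≤ l := by rw [hl]; nlinarith
  have hWl : (Real.exp 1 * N / P) ^ P = Real.exp l := by
    rw [hl, Real.exp_nat_mul, Real.exp_log hcard0]
  have hsl : (P : ℝ) / N * Real.log (Real.exp 1 * N / P) = l / N := by rw [hl]; ring
  rw [hsl]
  set s : ℝ := Real.sqrt (l / N) with hs
  have hs2 : s ^ 2 = l / N := Real.sq_sqrt (by positivity)
  have hs0 : 0 < s := Real.sqrt_pos.2 (by positivity)
  have hNs2 : N * s ^ 2 = l := by rw [hs2, mul_div_cancel₀ _ hN'.ne']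
  have hinv : 1 / (N : ℝ) ≤ s := by
    rw [div_le_iff₀ hN']
    nlinarith
  -- `L` is the logarithm of the bound for the sum of exponential moments over a level-set class
  set L : ℝ := 3 / 2 * l with hL
  set X : Finset (Fin N) → (Fin N → Bool) → ℝ := fun S σ =>
    ∑ k, (if σ k then (1 : ℝ) else -1) * (if k ∈ S then 1 else 0) with hX
  set t : ℕ → ℝ := fun j => ((j : ℝ) + 1) * (B / N) with ht
  set G : ℕ → (Fin N → Bool) → ℝ := fun j σ =>
    L - 1 + Real.exp (-L) * ∑ S ∈ levelSets F Z (t j), Real.exp (s * X S σ) with hG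
  have hGavg : ∀ j, (2 : ℝ)⁻¹ ^ N * ∑ σ : Fin N → Bool, G j σ ≤ L := by
    intro j
    have hE : (2 : ℝ)⁻¹ ^ N * ∑ σ : Fin N → Bool,
        ∑ S ∈ levelSets F Z (t j), Real.exp (s * X S σ) ≤ Real.exp L := by
      rw [sum_comm, mul_sum]
      calc _ ≤ ∑ S ∈ levelSets F Z (t j), Real.exp (N * (s ^ 2 / 2)) :=
            sum_le_sum fun S _ => sum_exp_le S s
        _ = (levelSets F Z (t j)).card * Real.exp (N * (s ^ 2 / 2)) := by simp
        _ ≤ Real.exp l * Real.exp (N * (s ^ 2 / 2)) := by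
            gcongr
            rw [← hWl]
            exact card_levelSets_le (t j) hP hNP hpdim
        _ = Real.exp L := by
            rw [← Real.exp_add]
            congr 1
            rw [hL]
            linarith
    have hsum : (2 : ℝ)⁻¹ ^ N * ∑ σ : Fin N → Bool, G j σ = L - 1 + Real.exp (-L) *
        ((2 : ℝ)⁻¹ ^ N * ∑ σ : Fin N → Bool,
          ∑ S ∈ levelSets F Z (t j), Real.exp (s * X S σ)) := by
      have h2 : (2 : ℝ)⁻¹ ^ N * 2 ^ N = 1 := by rw [← mul_pow]; norm_num
      simp only [hG, sum_add_distrib, ← mul_sum]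
      simp only [sum_const, card_univ, Fintype.card_fun, Fintype.card_bool, Fintype.card_fin,
        nsmul_eq_mul, Nat.cast_pow, Nat.cast_ofNat]
      linear_combination (L - 1) * h2
    rw [hsum]
    have := mul_le_mul_of_nonneg_left hE (Real.exp_pos (-L)).le
    rw [← Real.exp_add, neg_add_cancel, Real.exp_zero] at this
    linarith
  -- the bound for a single function, uniform over `F`
  have hpt : ∀ σ : Fin N → Bool, ∀ u ∈ F,
      (1 / (N : ℝ)) * ∑ k, (if σ k then (1 : ℝ) else -1) * u (Z k)
        ≤ (1 / (N : ℝ)) * (B + B / N * ∑ j ∈ range N, G j σ / s) := by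
    intro σ u hu
    refine mul_le_mul_of_nonneg_left ?_ (by positivity)
    set S : ℕ → Finset (Fin N) := fun j => univ.filter fun k => t j ≤ u (Z k) with hS
    have hSmem : ∀ j, S j ∈ levelSets F Z (t j) := fun j =>
      mem_levelSets.2 ⟨u, hu, fun k => by simp [hS]⟩
    have hXG : ∀ j, X (S j) σ ≤ G j σ / s := by
      intro j
      rw [le_div_iff₀ hs0, mul_comm]
      have h1 : s * X (S j) σ ≤ L - 1 + Real.exp (-L) * Real.exp (s * X (S j) σ) := by
        rw [← Real.exp_add]
        have := Real.add_one_le_exp (-L + s * X (S j) σ)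
        linarith
      refine h1.trans ?_
      simp only [hG]
      gcongr
      exact single_le_sum (f := fun S => Real.exp (s * X S σ))
        (fun _ _ => (Real.exp_pos _).le) (hSmem j)
    have hterm : ∀ k, (if σ k then (1 : ℝ) else -1) * u (Z k) ≤ B / N + B / N *
        ∑ j ∈ range N, (if σ k then (1 : ℝ) else -1) * (if k ∈ S j then 1 else 0) := by
      intro k
      have h := abs_le.1 (layer_cake N hN B hB (u (Z k)) (hrange u hu (Z k)))
      have hmem : ∀ j, (k ∈ S j) = (((j : ℝ) + 1) * (B / N) ≤ u (Z k)) := by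
        intro j
        simp [hS, ht]
      simp only [hmem, ← mul_sum]
      by_cases hk : σ k
      · simp only [hk, if_true]
        linarith [h.2]
      · simp only [hk]
        simp only [Bool.false_eq_true, if_false]
        linarith [h.1]
    calc ∑ k, (if σ k then (1 : ℝ) else -1) * u (Z k)
        ≤ ∑ k, (B / N + B / N *
          ∑ j ∈ range N, (if σ k then (1 : ℝ) else -1) * (if k ∈ S j then 1 else 0)) :=
          sum_le_sum fun k _ => hterm k
      _ = B + B / N * ∑ j ∈ range N, X (S j) σ := by
          rw [sum_add_distrib, ← mul_sum, sum_comm]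
          simp only [sum_const, card_univ, Fintype.card_fin, nsmul_eq_mul, hX]
          rw [mul_div_cancel₀ _ hN'.ne']
      _ ≤ B + B / N * ∑ j ∈ range N, G j σ / s := by
          gcongr with j _
          exact hXG j
  have hmain : empRademacher N F Z ≤ 5 / 2 * B * s := by
    have : Nonempty F := ⟨⟨_, h0⟩⟩
    calc empRademacher N F Z
        ≤ (2 : ℝ)⁻¹ ^ N * ∑ σ : Fin N → Bool,
          (1 / (N : ℝ)) * (B + B / N * ∑ j ∈ range N, G j σ / s) := by
          unfold empRademacher
          gcongr with σ _
          exact ciSup_le fun u => hpt σ u u.2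
      _ = (1 / (N : ℝ)) * (B + B / N *
          ∑ j ∈ range N, ((2 : ℝ)⁻¹ ^ N * ∑ σ : Fin N → Bool, G j σ) / s) := by
          have h2 : (2 : ℝ)⁻¹ ^ N * 2 ^ N = 1 := by rw [← mul_pow]; norm_num
          rw [← mul_sum, sum_add_distrib, ← mul_sum, sum_comm]
          simp only [← sum_div, ← mul_sum]
          simp only [sum_const, card_univ, Fintype.card_fun, Fintype.card_bool, Fintype.card_fin,
            nsmul_eq_mul, Nat.cast_pow, Nat.cast_ofNat]
          linear_combination (1 / (N : ℝ)) * B * h2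
      _ ≤ (1 / (N : ℝ)) * (B + B / N * ∑ j ∈ range N, L / s) := by
          gcongr with j _
          exact hGavg j
      _ = B * (1 / N) + B * (3 / 2 * s) := by
          have hLs : L / s = 3 / 2 * (N * s) := by
            rw [div_eq_iff hs0.ne', hL, ← hNs2]
            ring
          rw [sum_const, card_range, nsmul_eq_mul, hLs]
          field_simp
      _ ≤ B * s + B * (3 / 2 * s) := by gcongr
      _ = 5 / 2 * B * s := by ring
  have hsq : 1 ≤ Real.sqrt (3 / 2) := Real.one_le_sqrt.2 (by norm_num)
  refine hmain.trans ?_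
  gcongr
  linarith
end
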